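/- arXiv:2206.09918 — 3 statements merged into one kernel-verified Lean document; each statement's English description precedes it below -/
import Mathlib

section
/- The supremum of the Sender's ex ante payoff ∑_{i=0}^{n−1} v_i μ_F(B_i) over all obedient and incentive compatible deterministic representations {B_i}_{i=0}^{n−1} is attained; i.e., there exists an obedient, incentive compatible deterministic representation achieving this supremum. -/
open MeasureTheory Set

noncomputable section

namespace VerifiableDisclosure

/-- The measure on `[0,1]` induced by a density `f`. -/
def densMeasure (f : ℝ → ℝ) : Measure ℝ :=
  (volume.restrict (Icc (0:ℝ) 1)).withDensity (fun x => ENNReal.ofReal (f x))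

/-- `f` is a strictly positive density on `[0,1]` inducing a probability measure. -/
structure IsPrior (f : ℝ → ℝ) : Prop where
  meas : Measurable f
  pos : ∀ x ∈ Icc (0:ℝ) 1, 0 < f x
  prob : densMeasure f univ = 1

/-- The CDF of a measure on `ℝ`. -/
def mcdf (μ : Measure ℝ) (x : ℝ) : ℝ := (μ (Iic x)).toReal

/-- The support of a measure on `ℝ`: points all of whose neighborhoods have positive mass. -/
def msupport (μ : Measure ℝ) : Set ℝ := {x | ∀ U ∈ nhds x, μ U ≠ 0}

/-- `G` is a distribution on `[0,1]` that is a mean-preserving contraction of `μ`. -/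
def IsMPC (μ G : Measure ℝ) : Prop :=
  IsProbabilityMeasure G ∧ msupport G ⊆ Icc (0:ℝ) 1 ∧
    (∀ x ∈ Icc (0:ℝ) 1, (∫ s in (0:ℝ)..x, mcdf G s) ≤ ∫ s in (0:ℝ)..x, mcdf μ s) ∧
    (∫ s in (0:ℝ)..(1:ℝ), mcdf G s) = ∫ s in (0:ℝ)..(1:ℝ), mcdf μ s

/-- Conditional mean of `μ` on the set `B`. -/
def condMean (μ : Measure ℝ) (B : Set ℝ) : ℝ := (∫ ω in B, ω ∂μ) / (μ B).toReal

/-- `G` is a bi-pooling distribution relative to the prior `μ`. -/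
def IsBiPooling (μ G : Measure ℝ) : Prop :=
  IsMPC μ G ∧
    ∃ (ι : Type) (a b : ι → ℝ),
      (∀ i, (0:ℝ) ≤ a i ∧ a i ≤ b i ∧ b i ≤ 1) ∧
      (Pairwise fun i j => Disjoint (Icc (a i) (b i)) (Icc (a j) (b j))) ∧
      (∀ i, G (Icc (a i) (b i)) = μ (Icc (a i) (b i))) ∧
      (∀ i, (msupport (G.restrict (Icc (a i) (b i)))).encard ≤ 2) ∧
      (∀ s : Set ℝ, MeasurableSet s → s ⊆ Icc (0:ℝ) 1 \ (⋃ i, Icc (a i) (b i)) → G s = μ s)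

/-- `G` is a bi-pooling solution of the information design problem with value function `u`. -/
def IsBiPoolingSolution (μ G : Measure ℝ) (u : ℝ → ℝ) : Prop :=
  IsBiPooling μ G ∧ ∀ G' : Measure ℝ, IsMPC μ G' → (∫ x, u x ∂G') ≤ ∫ x, u x ∂G

/-- A deterministic representation: closed sets covering `[0,1]`, pairwise `μ`-null overlaps. -/
def IsDetRep (μ : Measure ℝ) (n : ℕ) (B : ℕ → Set ℝ) : Prop :=
  (∀ i < n, IsClosed (B i) ∧ B i ⊆ Icc (0:ℝ) 1) ∧
    (⋃ i ∈ Finset.range n, B i) = Icc (0:ℝ) 1 ∧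
    (∀ i < n, ∀ j < n, i ≠ j → μ (B i ∩ B j) = 0)

/-- Incentive compatibility of a deterministic representation. -/
def IsIC (n : ℕ) (γ : ℕ → ℝ) (B : ℕ → Set ℝ) : Prop :=
  ∀ i < n, Icc (γ i) (γ (i+1)) ⊆ ⋃ j ∈ Finset.Ico i n, B j

/-- Obedience of a deterministic representation. -/
def IsObedient (μ : Measure ℝ) (n : ℕ) (γ : ℕ → ℝ) (B : ℕ → Set ℝ) : Prop :=
  ∀ i < n, μ (B i) ≠ 0 → condMean μ (B i) ∈ Icc (γ i) (γ (i+1))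

/-- `B` is a deterministic representation of the distribution `G`:
`G` places mass `μ (B i)` on the conditional mean of `B i`. -/
def IsDetRepOf (μ : Measure ℝ) (n : ℕ) (B : ℕ → Set ℝ) (G : Measure ℝ) : Prop :=
  IsDetRep μ n B ∧
    G = ∑ i ∈ Finset.range n, (μ (B i)) • Measure.dirac (condMean μ (B i))

/-- `{BL, BH}` is a nested intervals pair. -/
def IsNestedPair (BL BH : Set ℝ) : Prop :=
  ∃ w₁ b₁ b₂ w₂ : ℝ, w₁ < b₁ ∧ b₁ ≤ b₂ ∧ b₂ < w₂ ∧
    BL = Icc b₁ b₂ ∧ BH = Icc w₁ b₁ ∪ Icc b₂ w₂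

/-- A canonical representation of `G`: a deterministic representation of `G` in which every
element with nonempty interior is either an interval, or the outer member of a nested
intervals pair whose inner member has a lower index. -/
def IsCanonicalRep (μ : Measure ℝ) (n : ℕ) (B : ℕ → Set ℝ) (G : Measure ℝ) : Prop :=
  IsDetRepOf μ n B G ∧
    ∀ i < n, (interior (B i)).Nonempty →
      (∃ c d : ℝ, B i = Icc c d) ∨ ∃ L < i, IsNestedPair (B L) (B i)

/-- Index `i` is skipped: `B i` has empty interior. -/
def Skipped (B : ℕ → Set ℝ) (i : ℕ) : Prop := interior (B i) = ∅

/-- A skipped index `i` is harmlessly skipped if `A i ⊆ ⋃_{k > i} B k`. -/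
def HarmlesslySkipped (n : ℕ) (γ : ℕ → ℝ) (B : ℕ → Set ℝ) (i : ℕ) : Prop :=
  Icc (γ i) (γ (i+1)) ⊆ ⋃ k ∈ Finset.Ioo i n, B k

/-- Laminar representation property. -/
def IsLaminar (n : ℕ) (B : ℕ → Set ℝ) : Prop :=
  ∀ i < n, B i = closure ((convexHull ℝ (B i)) \ ⋃ j ∈ Finset.range i, convexHull ℝ (B j))

/-- Sender's ex ante payoff of a deterministic representation. -/
def payoff (μ : Measure ℝ) (n : ℕ) (v : ℕ → ℝ) (B : ℕ → Set ℝ) : ℝ :=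
  ∑ i ∈ Finset.range n, v i * (μ (B i)).toReal

/-- Conditional CDF of the prior with density `f` on the interval `[w₁, w₂]`. -/
def condCDF' (f : ℝ → ℝ) (w₁ w₂ x : ℝ) : ℝ :=
  (mcdf (densMeasure f) x - mcdf (densMeasure f) w₁) /
    (mcdf (densMeasure f) w₂ - mcdf (densMeasure f) w₁)

/-- `{zL, zH}` is a feasible bi-pooling support for the interval `[w₁, w₂]`. -/
def FeasibleSupport (f : ℝ → ℝ) (w₁ w₂ zL zH : ℝ) : Prop :=
  ∃ G : Measure ℝ, IsProbabilityMeasure G ∧ msupport G ⊆ {zL, zH} ∧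
    (∀ x ∈ Icc w₁ w₂, (∫ s in w₁..x, mcdf G s) ≤ ∫ s in w₁..x, condCDF' f w₁ w₂ s) ∧
    (∫ s in w₁..w₂, mcdf G s) = ∫ s in w₁..w₂, condCDF' f w₁ w₂ s

/-!
Only the masses and first moments of the cells enter obedience and the payoff, so it suffices that
the vectors of masses and first moments attained by incentive compatible representations form a
compact set: obedience is then a closed condition and the payoff a linear functional. Incentive
compatibility says that, almost everywhere, the cell `B i` lies in `[0, γ (i + 1)]`.

For multipliers `a`, give each point `x` the available index `i` maximising
`s i * x ^ 2 + a (i, 0) + a (i, 1) * x`, where `s` is strictly increasing. The maximal total score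
is a convex function of `a` whose gradient is the moment vector of these cells, while the moment
vector `y` of any incentive compatible representation is the slope of an affine minorant. Minimising
the difference after adding `ε‖a‖²`, and letting `ε → 0`, exhibits `y` as a limit of gradients.

The difference of a later and an earlier quadratic score is convex, so the set on which `i` beats
all later indices is an interval, and the cells are these intervals with the lower-index ones
removed. Such laminar families are parametrised by finitely many endpoints in a compact box, on
which the moments are continuous because `μ` has no atoms; hence `y` itself is attained by one.
-/

open Filter Topology RealInnerProductSpace

section ConvexSubgradient

variable {E : Type*} [NormedAddCommGroup E] [InnerProductSpace ℝ E] {W : E → ℝ} {M : E → E}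

lemma hasFDerivAt_of_subgradient {a : E} (hM : ContinuousAt M a)
    (hW : ∀ a b, W a + ⟪M a, b - a⟫ ≤ W b) : HasFDerivAt W (innerSL ℝ (M a)) a := by
  rw [hasFDerivAt_iff_isLittleO, Asymptotics.isLittleO_iff]
  intro δ hδ
  filter_upwards [Metric.continuousAt_iff'.1 hM δ hδ] with b hb
  have hlower : 0 ≤ W b - W a - ⟪M a, b - a⟫ := by linarith [hW a b]
  have hupper : W b - W a - ⟪M a, b - a⟫ ≤ ⟪M b - M a, b - a⟫ := by
    have h := hW b a
    rw [← neg_sub b a, inner_neg_right] at h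
    rw [inner_sub_left]
    linarith
  calc ‖W b - W a - innerSL ℝ (M a) (b - a)‖ = W b - W a - ⟪M a, b - a⟫ := by
        rw [innerSL_apply_apply, Real.norm_of_nonneg hlower]
    _ ≤ ⟪M b - M a, b - a⟫ := hupper
    _ ≤ ‖M b - M a‖ * ‖b - a‖ := real_inner_le_norm _ _
    _ ≤ δ * ‖b - a‖ := by gcongr; exact (dist_eq_norm (M b) (M a) ▸ hb).le

variable [ProperSpace E] {y : E} {c : ℝ}

/-- The minimiser of `W - ⟪y, ·⟫ + ε‖·‖²` exists by coercivity, and its first-order condition reads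
`M a - y = -2εa`, while comparison with the value at `0` bounds `ε‖a‖²`. -/
lemma exists_norm_sub_sq_le_of_affine_minorant (hM : Continuous M)
    (hW : ∀ a b, W a + ⟪M a, b - a⟫ ≤ W b) (hy : ∀ a, c + ⟪y, a⟫ ≤ W a) {ε : ℝ} (hε : 0 < ε) :
    ∃ a, ‖M a - y‖ ^ 2 ≤ 4 * ε * (W 0 - c) := by
  let D : E → ℝ := fun a ↦ W a - ⟪y, a⟫ + ε * ‖a‖ ^ 2
  have hderiv (a : E) : HasFDerivAt D
      (innerSL ℝ (M a) - innerSL ℝ y + ε • (2 • innerSL ℝ a)) a :=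
    ((hasFDerivAt_of_subgradient hM.continuousAt hW).sub (innerSL ℝ y).hasFDerivAt).add
      ((hasStrictFDerivAt_norm_sq a).hasFDerivAt.const_mul ε)
  have hlower (a : E) : c + ε * ‖a‖ ^ 2 ≤ D a := by linarith [hy a]
  have hcoercive : Tendsto D (cocompact E) atTop :=
    tendsto_atTop_mono hlower <| tendsto_atTop_add_const_left _ c <|
      ((tendsto_pow_atTop two_ne_zero).comp tendsto_norm_cocompact_atTop).const_mul_atTop hε
  have hcont : Continuous D := continuous_iff_continuousAt.2 fun a ↦ (hderiv a).continuousAt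
  obtain ⟨a, ha⟩ := hcont.exists_forall_le hcoercive
  have hstationary : M a - y = -((2 * ε) • a) := by
    have hmin : IsLocalMin D a := .of_forall ha
    have h := hmin.hasFDerivAt_eq_zero (hderiv a)
    rw [eq_neg_iff_add_eq_zero, ← innerSL_inj (𝕜 := ℝ), map_zero, ← h]
    simp [mul_smul, two_smul, smul_add]
  have hbound : ε * ‖a‖ ^ 2 ≤ W 0 - c := by
    have hzero : D 0 = W 0 := by simp [D]
    linarith [hlower a, ha 0]
  refine ⟨a, ?_⟩
  calc ‖M a - y‖ ^ 2 = 4 * ε * (ε * ‖a‖ ^ 2) := by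
        rw [hstationary, norm_neg, norm_smul, Real.norm_of_nonneg (by positivity)]
        ring
    _ ≤ 4 * ε * (W 0 - c) := by gcongr

lemma mem_closure_range_of_affine_minorant (hM : Continuous M)
    (hW : ∀ a b, W a + ⟪M a, b - a⟫ ≤ W b) (hy : ∀ a, c + ⟪y, a⟫ ≤ W a) :
    y ∈ closure (range M) := by
  rw [Metric.mem_closure_range_iff]
  intro δ hδ
  have hgap : 0 ≤ W 0 - c := by simpa using hy 0
  obtain ⟨a, ha⟩ := exists_norm_sub_sq_le_of_affine_minorant hM hW hy
    (ε := δ ^ 2 / (4 * (W 0 - c + 1))) (by positivity)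
  refine ⟨a, ?_⟩
  rw [dist_comm, dist_eq_norm]
  refine lt_of_pow_lt_pow_left₀ 2 hδ.le (ha.trans_lt ?_)
  calc 4 * (δ ^ 2 / (4 * (W 0 - c + 1))) * (W 0 - c)
      = δ ^ 2 * ((W 0 - c) / (W 0 - c + 1)) := by field_simp
    _ < δ ^ 2 * 1 := by gcongr; rw [div_lt_one (by positivity)]; linarith
    _ = δ ^ 2 := mul_one _

end ConvexSubgradient

section BestCells

variable {Ω ι : Type*} {T : ι → Set Ω} {u : ι → Ω → ℝ} {x : Ω}

/-- The points of `T i` at which the score `u i` is maximal among the scores `u l` of all indices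
`l` available there, i.e. with `x ∈ T l`. -/
def bestCell (T : ι → Set Ω) (u : ι → Ω → ℝ) (i : ι) : Set Ω :=
  {x ∈ T i | ∀ l, x ∈ T l → u l x ≤ u i x}

lemma exists_mem_bestCell [Finite ι] {j : ι} (hj : x ∈ T j) : ∃ i, x ∈ bestCell T u i := by
  obtain ⟨i, hi, hmax⟩ := exists_max_image {i | x ∈ T i} (u · x) (toFinite _) ⟨j, hj⟩
  exact ⟨i, hi, hmax⟩

lemma bestCell_index_unique (hinj : Function.Injective (u · x)) {i j : ι}
    (hi : x ∈ bestCell T u i) (hj : x ∈ bestCell T u j) : i = j :=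
  hinj (le_antisymm (hj.2 i hi.1) (hi.2 j hj.1))

/-- The points of `T i` at which the score `u i` is at least the scores of all later indices. -/
def dominatesLater [LT ι] (T : ι → Set Ω) (u : ι → Ω → ℝ) (i : ι) : Set Ω :=
  {x ∈ T i | ∀ l > i, u l x ≤ u i x}

lemma dominatesLater_eq_inter [LT ι] (T : ι → Set Ω) (u : ι → Ω → ℝ) (i : ι) :
    dominatesLater T u i = T i ∩ ⋂ l > i, {x | u l x ≤ u i x} := by
  ext x
  simp [dominatesLater]

lemma mem_bestCell_iff_dominatesLater [LinearOrder ι] [Finite ι] (hT : Monotone T)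
    (hinj : Function.Injective (u · x)) {i : ι} :
    x ∈ bestCell T u i ↔ x ∈ dominatesLater T u i \ ⋃ l < i, dominatesLater T u l := by
  have hbest {j : ι} (hj : x ∈ bestCell T u j) :
      x ∈ dominatesLater T u j ∧ ∀ l < j, x ∉ dominatesLater T u l :=
    ⟨⟨hj.1, fun l hl ↦ hj.2 l (hT hl.le hj.1)⟩,
      fun l hl hx ↦ hl.ne (hinj (le_antisymm (hj.2 l hx.1) (hx.2 j hl)))⟩
  simp only [Set.mem_sdiff, mem_iUnion, not_exists]
  refine ⟨hbest, fun ⟨hi, hfirst⟩ ↦ ?_⟩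
  obtain ⟨j, hj⟩ := exists_mem_bestCell (u := u) hi.1
  obtain hij | rfl | hji := lt_trichotomy i j
  · exact absurd hi ((hbest hj).2 i hij)
  · exact hj
  · exact absurd (hbest hj).1 (hfirst j hji)

variable [MeasurableSpace Ω] {μ : Measure Ω}

lemma measurableSet_bestCell [Countable ι] (hT : ∀ i, MeasurableSet (T i))
    (hu : ∀ i, Measurable (u i)) (i : ι) : MeasurableSet (bestCell T u i) := by
  have heq : bestCell T u i = T i ∩ ⋂ l, ((T l)ᶜ ∪ {x | u l x ≤ u i x}) := by
    ext x
    simp [bestCell, imp_iff_not_or]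
  rw [heq]
  exact (hT i).inter <| .iInter fun l ↦ (hT l).compl.union (measurableSet_le (hu l) (hu i))

/-- Measurable cells `S i`, one index per point up to a null set, with `S i` inside `T i`. -/
structure IsSubordinatePartition (μ : Measure Ω) (T S : ι → Set Ω) : Prop where
  measurableSet (i : ι) : MeasurableSet (S i)
  ae_mem_iff : ∀ᵐ x ∂μ, ∃ i, x ∈ T i ∧ ∀ l, x ∈ S l ↔ l = i

lemma IsSubordinatePartition.bestCell [Finite ι] {S : ι → Set Ω}
    (hS : IsSubordinatePartition μ T S) (hT : ∀ i, MeasurableSet (T i))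
    (hu : ∀ i, Measurable (u i)) (hinj : ∀ᵐ x ∂μ, Function.Injective (u · x)) :
    IsSubordinatePartition μ T (bestCell T u) where
  measurableSet := measurableSet_bestCell hT hu
  ae_mem_iff := by
    filter_upwards [hS.ae_mem_iff, hinj] with x ⟨j, hj, _⟩ hx
    obtain ⟨i, hi⟩ := exists_mem_bestCell (u := u) hj
    exact ⟨i, hi.1, fun l ↦ ⟨fun hl ↦ bestCell_index_unique hx hl hi, fun hl ↦ hl ▸ hi⟩⟩

variable [Fintype ι]

/-- The total score collected when each point of `S i` is scored by `u i`. -/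
def totalScore (μ : Measure Ω) (u : ι → Ω → ℝ) (S : ι → Set Ω) : ℝ :=
  ∑ i, ∫ x in S i, u i x ∂μ

lemma totalScore_le_bestCell {S : ι → Set Ω} (hS : IsSubordinatePartition μ T S)
    (hT : ∀ i, MeasurableSet (T i)) (hu : ∀ i, Measurable (u i)) (hint : ∀ i, Integrable (u i) μ)
    (hinj : ∀ᵐ x ∂μ, Function.Injective (u · x)) :
    totalScore μ u S ≤ totalScore μ u (bestCell T u) := by
  classical
  have hB := hS.bestCell hT hu hinj
  have hintegral {R : ι → Set Ω} (hR : IsSubordinatePartition μ T R) :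
      totalScore μ u R = ∫ x, ∑ i, (R i).indicator (u i) x ∂μ := by
    rw [integral_finsetSum _ fun i _ ↦ (hint i).indicator (hR.measurableSet i)]
    exact Finset.sum_congr rfl fun i _ ↦ (integral_indicator (hR.measurableSet i)).symm
  rw [hintegral hS, hintegral hB]
  refine integral_mono_ae
    (integrable_finsetSum _ fun i _ ↦ (hint i).indicator (hS.measurableSet i))
    (integrable_finsetSum _ fun i _ ↦ (hint i).indicator (hB.measurableSet i)) ?_
  filter_upwards [hS.ae_mem_iff, hB.ae_mem_iff] with x ⟨j, hjT, hj⟩ ⟨i, _, hi⟩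
  have hbest : x ∈ bestCell T u i := (hi i).2 rfl
  simpa [indicator_apply, hi, hj] using hbest.2 j hjT

end BestCells

lemma tendsto_setIntegral_of_ae_eventually_mem_iff {Ω X F : Type*} [MeasurableSpace Ω]
    {μ : Measure Ω} [NormedAddCommGroup F] [NormedSpace ℝ F] {φ : Ω → F} (hφ : Integrable φ μ)
    {l : Filter X} [l.IsCountablyGenerated] {A : X → Set Ω} {A₀ : Set Ω}
    (hA : ∀ t, MeasurableSet (A t)) (hA₀ : MeasurableSet A₀)
    (h : ∀ᵐ x ∂μ, ∀ᶠ t in l, (x ∈ A t ↔ x ∈ A₀)) :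
    Tendsto (fun t ↦ ∫ x in A t, φ x ∂μ) l (𝓝 (∫ x in A₀, φ x ∂μ)) := by
  classical
  simp_rw [← integral_indicator (hA _), ← integral_indicator hA₀]
  refine tendsto_integral_filter_of_dominated_convergence (‖φ ·‖)
    (.of_forall fun t ↦ hφ.aestronglyMeasurable.indicator (hA t))
    (.of_forall fun t ↦ .of_forall fun x ↦ norm_indicator_le_norm_self φ x) hφ.norm ?_
  filter_upwards [h] with x hx
  refine tendsto_const_nhds.congr' ?_
  filter_upwards [hx] with t ht
  simp only [indicator_apply, ht]

section Moments

variable {Ω ι κ : Type*} [MeasurableSpace Ω] {μ : Measure Ω} [Fintype κ]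
  {φ : κ → Ω → ℝ} {ψ : ι → Ω → ℝ} {T S : ι → Set Ω}

/-- The integrals of the functions `φ k` over the cells `S i`. -/
def momentVector (μ : Measure Ω) (φ : κ → Ω → ℝ) (S : ι → Set Ω) : EuclideanSpace ℝ (ι × κ) :=
  .toLp 2 fun p ↦ ∫ x in S p.1, φ p.2 x ∂μ

/-- The score `ψ` corrected by the moment functions `φ` with multipliers `a`. -/
def lagrangianScore (ψ : ι → Ω → ℝ) (φ : κ → Ω → ℝ) (a : EuclideanSpace ℝ (ι × κ)) (i : ι)
    (x : Ω) : ℝ :=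
  ψ i x + ∑ k, a (i, k) * φ k x

lemma measurable_lagrangianScore (hψ : ∀ i, Measurable (ψ i)) (hφ : ∀ k, Measurable (φ k))
    (a : EuclideanSpace ℝ (ι × κ)) (i : ι) : Measurable (lagrangianScore ψ φ a i) := by
  unfold lagrangianScore
  fun_prop

lemma integrable_lagrangianScore (hψ : ∀ i, Integrable (ψ i) μ) (hφ : ∀ k, Integrable (φ k) μ)
    (a : EuclideanSpace ℝ (ι × κ)) (i : ι) : Integrable (lagrangianScore ψ φ a i) μ :=
  (hψ i).add (integrable_finsetSum _ fun k _ ↦ (hφ k).const_mul _)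

lemma totalScore_lagrangianScore [Fintype ι] (hψ : ∀ i, Integrable (ψ i) μ)
    (hφ : ∀ k, Integrable (φ k) μ) (a : EuclideanSpace ℝ (ι × κ)) (S : ι → Set Ω) :
    totalScore μ (lagrangianScore ψ φ a) S = totalScore μ ψ S + ⟪momentVector μ φ S, a⟫ := by
  have hcell (i : ι) : ∫ x in S i, lagrangianScore ψ φ a i x ∂μ =
      ∫ x in S i, ψ i x ∂μ + ∑ k, a (i, k) * ∫ x in S i, φ k x ∂μ := by
    have hterm (k : κ) : Integrable (fun x ↦ a (i, k) * φ k x) (μ.restrict (S i)) :=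
      (hφ k).integrableOn.const_mul _
    simp only [lagrangianScore]
    rw [integral_add (hψ i).integrableOn (integrable_finsetSum _ fun k _ ↦ hterm k),
      integral_finsetSum _ fun k _ ↦ hterm k]
    simp only [integral_const_mul]
  simp only [totalScore, hcell, Finset.sum_add_distrib, PiLp.inner_apply, momentVector,
    Fintype.sum_prod_type, RCLike.inner_apply, conj_trivial]

variable [Finite ι]

lemma continuous_momentVector_bestCell (hT : ∀ i, MeasurableSet (T i))
    (hψ : ∀ i, Measurable (ψ i)) (hφ : ∀ k, Measurable (φ k)) (hφi : ∀ k, Integrable (φ k) μ)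
    (hinj : ∀ a, ∀ᵐ x ∂μ, Function.Injective (lagrangianScore ψ φ a · x)) :
    Continuous fun a ↦ momentVector μ φ (bestCell T (lagrangianScore ψ φ a)) := by
  refine (PiLp.continuous_toLp 2 _).comp (continuous_pi fun p ↦ continuous_iff_continuousAt.2
    fun a ↦ ?_)
  have hmeas (b) := measurableSet_bestCell hT (measurable_lagrangianScore hψ hφ b) p.1
  refine tendsto_setIntegral_of_ae_eventually_mem_iff (hφi p.2) hmeas (hmeas a) ?_
  filter_upwards [hinj a] with x hx
  have hcont (i : ι) : Continuous fun b ↦ lagrangianScore ψ φ b i x := by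
    unfold lagrangianScore
    fun_prop
  have horder : ∀ᶠ b in 𝓝 a, ∀ i l : ι, lagrangianScore ψ φ b i x ≤ lagrangianScore ψ φ b l x ↔
      lagrangianScore ψ φ a i x ≤ lagrangianScore ψ φ a l x := by
    simp only [eventually_all]
    intro i l
    obtain rfl | hil := eq_or_ne i l
    · simp
    obtain h | h := (hx.ne hil).lt_or_gt
    · filter_upwards [(hcont i).continuousAt.eventually_lt (hcont l).continuousAt h] with b hb
      exact iff_of_true hb.le h.le
    · filter_upwards [(hcont l).continuousAt.eventually_lt (hcont i).continuousAt h] with b hb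
      exact iff_of_false hb.not_ge h.not_ge
  filter_upwards [horder] with b hb
  simp only [bestCell, mem_ofPred_eq, hb]

/-- As a function of the multipliers, the maximal total score is convex with subgradient the moment
vector of the optimal partition, and each partition supplies an affine minorant whose slope is its
own moment vector. -/
theorem momentVector_mem_closure_range_bestCell (hT : ∀ i, MeasurableSet (T i))
    (hψ : ∀ i, Measurable (ψ i)) (hψi : ∀ i, Integrable (ψ i) μ)
    (hφ : ∀ k, Measurable (φ k)) (hφi : ∀ k, Integrable (φ k) μ)
    (hinj : ∀ a, ∀ᵐ x ∂μ, Function.Injective (lagrangianScore ψ φ a · x))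
    (hS : IsSubordinatePartition μ T S) :
    momentVector μ φ S ∈
      closure (range fun a ↦ momentVector μ φ (bestCell T (lagrangianScore ψ φ a))) := by
  cases nonempty_fintype ι
  have hmeas := measurable_lagrangianScore hψ hφ
  have hoptimal (a : EuclideanSpace ℝ (ι × κ)) {R : ι → Set Ω}
      (hR : IsSubordinatePartition μ T R) : totalScore μ ψ R + ⟪momentVector μ φ R, a⟫ ≤
        totalScore μ (lagrangianScore ψ φ a) (bestCell T (lagrangianScore ψ φ a)) := by
    rw [← totalScore_lagrangianScore hψi hφi]
    exact totalScore_le_bestCell hR hT (hmeas a) (integrable_lagrangianScore hψi hφi a) (hinj a)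
  refine mem_closure_range_of_affine_minorant
    (W := fun a ↦ totalScore μ (lagrangianScore ψ φ a) (bestCell T (lagrangianScore ψ φ a)))
    (continuous_momentVector_bestCell hT hψ hφ hφi hinj) (fun a b ↦ ?_) (hoptimal · hS)
  refine le_trans (le_of_eq ?_) (hoptimal b (hS.bestCell hT (hmeas a) (hinj a)))
  rw [totalScore_lagrangianScore hψi hφi, inner_sub_right]
  ring

end Moments

section LaminarCells

lemma eventually_nhds_compare_iff {α : Type*} [LinearOrder α] [TopologicalSpace α]
    [OrderTopology α] {p x : α} (h : x ≠ p) :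
    ∀ᶠ y in 𝓝 p, (y < x ↔ p < x) ∧ (y ≤ x ↔ p ≤ x) ∧ (x < y ↔ x < p) ∧ (x ≤ y ↔ x ≤ p) := by
  obtain h | h := h.lt_or_gt
  · filter_upwards [Ioi_mem_nhds h] with y (hy : x < y)
    simp only [h, h.le, hy, hy.le, h.not_ge, hy.not_ge, h.not_gt, hy.not_gt, iff_self, and_self]
  · filter_upwards [Iio_mem_nhds h] with y (hy : y < x)
    simp only [h, h.le, hy, hy.le, h.not_ge, hy.not_ge, h.not_gt, hy.not_gt, iff_self, and_self]

lemma exists_eq_Icc_of_convex_of_isClosed_of_subset_Icc {J : Set ℝ} (hconv : Convex ℝ J)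
    (hclosed : IsClosed J) (hne : J.Nonempty) {c d : ℝ} (hJ : J ⊆ Icc c d) :
    ∃ p ∈ Icc c d, ∃ q ∈ Icc c d, J = Icc p q := by
  have hcompact : IsCompact J := isCompact_Icc.of_isClosed_subset hclosed hJ
  exact ⟨sInf J, hJ (hcompact.sInf_mem hne), sSup J, hJ (hcompact.sSup_mem hne),
    eq_Icc_of_connected_compact ⟨hne, hconv.isPreconnected⟩ hcompact⟩

variable {ι : Type*} [LinearOrder ι]

/-- The laminar family with hulls `[(θ i).1, (θ i).2]`: each cell is its hull minus the interiors
of the hulls with a lower index. -/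
def laminarCell (θ : ι → ℝ × ℝ) (i : ι) : Set ℝ :=
  Icc (θ i).1 (θ i).2 \ ⋃ l < i, Ioo (θ l).1 (θ l).2

lemma isClosed_laminarCell (θ : ι → ℝ × ℝ) (i : ι) : IsClosed (laminarCell θ i) :=
  isClosed_Icc.sdiff (isOpen_biUnion fun _ _ ↦ isOpen_Ioo)

lemma mem_laminarCell {θ : ι → ℝ × ℝ} {i : ι} {x : ℝ} :
    x ∈ laminarCell θ i ↔ x ∈ Icc (θ i).1 (θ i).2 ∧ ∀ l < i, x ∉ Ioo (θ l).1 (θ l).2 := by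
  simp only [laminarCell, Set.mem_sdiff, mem_iUnion, not_exists]

variable {μ : Measure ℝ} [NullSingletonClass μ]

lemma measure_laminarCell_inter (θ : ι → ℝ × ℝ) :
    Pairwise fun i j ↦ μ (laminarCell θ i ∩ laminarCell θ j) = 0 := by
  suffices hlt : ∀ i j, i < j → μ (laminarCell θ i ∩ laminarCell θ j) = 0 from
    fun i j hij ↦ hij.lt_or_gt.elim (hlt i j) fun h ↦
      (congrArg μ (inter_comm _ _)).trans (hlt j i h)
  intro i j hij
  refine measure_mono_null ?_ ((toFinite {(θ i).1, (θ i).2}).measure_zero μ)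
  rintro x ⟨hi, hj⟩
  have hx := (mem_laminarCell.1 hi).1
  have hx' := (mem_laminarCell.1 hj).2 i hij
  by_contra hend
  rw [mem_insert_iff, mem_singleton_iff, not_or] at hend
  exact hx' ⟨hx.1.lt_of_ne' hend.1, hx.2.lt_of_ne hend.2⟩

lemma continuous_momentVector_laminarCell [Finite ι] {κ : Type*} {φ : κ → ℝ → ℝ}
    (hφ : ∀ k, Integrable (φ k) μ) :
    Continuous fun θ : ι → ℝ × ℝ ↦ momentVector μ φ (laminarCell θ) := by
  refine (PiLp.continuous_toLp 2 _).comp (continuous_pi fun p ↦ continuous_iff_continuousAt.2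
    fun θ ↦ ?_)
  have hmeas (η : ι → ℝ × ℝ) := (isClosed_laminarCell η p.1).measurableSet
  refine tendsto_setIntegral_of_ae_eventually_mem_iff (hφ p.2) hmeas (hmeas θ) ?_
  have hne : ∀ᵐ x ∂μ, ∀ i, x ≠ (θ i).1 ∧ x ≠ (θ i).2 := by
    rw [ae_all_iff]
    exact fun i ↦ (Measure.ae_ne μ _).and (Measure.ae_ne μ _)
  filter_upwards [hne] with x hx
  have hcompare : ∀ᶠ η : ι → ℝ × ℝ in 𝓝 θ, ∀ i,
      (x ∈ Icc (η i).1 (η i).2 ↔ x ∈ Icc (θ i).1 (θ i).2) ∧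
      (x ∈ Ioo (η i).1 (η i).2 ↔ x ∈ Ioo (θ i).1 (θ i).2) := by
    rw [eventually_all]
    intro i
    have hfst : Tendsto (fun η : ι → ℝ × ℝ ↦ (η i).1) (𝓝 θ) (𝓝 (θ i).1) :=
      (continuous_fst.comp (continuous_apply i)).tendsto θ
    have hsnd : Tendsto (fun η : ι → ℝ × ℝ ↦ (η i).2) (𝓝 θ) (𝓝 (θ i).2) :=
      (continuous_snd.comp (continuous_apply i)).tendsto θ
    filter_upwards [hfst.eventually (eventually_nhds_compare_iff (hx i).1),
      hsnd.eventually (eventually_nhds_compare_iff (hx i).2)] with η h₁ h₂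
    simp only [mem_Icc, mem_Ioo, h₁, h₂, and_self]
  filter_upwards [hcompare] with η hη
  simp only [mem_laminarCell, hη]

variable [OrderTop ι] {c : ℝ} {g : ι → ℝ} {θ : ι → ℝ × ℝ} {x : ℝ}

/-- Endpoints of hulls `[(θ i).1, (θ i).2] ⊆ [c, g i]`, allowed to be reversed so that cells may be
empty; the last hull is all of `[c, g ⊤]`, so that the cells cover this interval. -/
def hullParams (c : ℝ) (g : ι → ℝ) : Set (ι → ℝ × ℝ) :=
  (univ.pi fun i ↦ Icc c (g i) ×ˢ Icc c (g i)) ∩ {θ | θ ⊤ = (c, g ⊤)}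

lemma isCompact_hullParams (c : ℝ) (g : ι → ℝ) : IsCompact (hullParams c g) :=
  (isCompact_univ_pi fun _ ↦ isCompact_Icc.prod isCompact_Icc).inter_right
    (isClosed_eq (continuous_apply ⊤) continuous_const)

lemma laminarCell_subset_Icc (hθ : θ ∈ hullParams c g) (i : ι) :
    laminarCell θ i ⊆ Icc c (g i) :=
  sdiff_subset.trans (Icc_subset_Icc (hθ.1 i trivial).1.1 (hθ.1 i trivial).2.2)

lemma exists_ge_mem_laminarCell [Finite ι] (hθ : θ ∈ hullParams c g) (hx : x ∈ Icc c (g ⊤))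
    {i : ι} (hi : ∀ l < i, g l ≤ x) : ∃ j ≥ i, x ∈ laminarCell θ j := by
  have htop : x ∈ Icc (θ ⊤).1 (θ ⊤).2 := by rwa [hθ.2]
  obtain ⟨j, ⟨hij, hj⟩, hmin⟩ := (toFinite {j | i ≤ j ∧ x ∈ Icc (θ j).1 (θ j).2}).exists_minimal
    ⟨⊤, le_top, htop⟩
  refine ⟨j, hij, mem_laminarCell.2 ⟨hj, fun l hlj hl ↦ ?_⟩⟩
  obtain hil | hli := le_or_gt i l
  · exact hlj.not_ge (hmin ⟨hil, Ioo_subset_Icc_self hl⟩ hlj.le)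
  · exact (hl.2.trans_le (hθ.1 l trivial).2.2).not_ge (hi l hli)

end LaminarCells

section QuadraticScores

variable {ι : Type*} {s : ι → ℝ}

/-- Quadratic scores with prescribed leading coefficients `s` and free lower-order coefficients. -/
def quadraticScore (s : ι → ℝ) (a : EuclideanSpace ℝ (ι × Fin 2)) : ι → ℝ → ℝ :=
  lagrangianScore (fun i x ↦ s i * x ^ 2) (fun (k : Fin 2) x ↦ x ^ (k : ℕ)) a

lemma quadraticScore_apply (s : ι → ℝ) (a : EuclideanSpace ℝ (ι × Fin 2)) (i : ι) (x : ℝ) :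
    quadraticScore s a i x = s i * x ^ 2 + (a (i, 0) + a (i, 1) * x) := by
  simp [quadraticScore, lagrangianScore]

lemma ae_injective_quadraticScore [Countable ι] {μ : Measure ℝ} [NullSingletonClass μ]
    (hs : Function.Injective s) (a : EuclideanSpace ℝ (ι × Fin 2)) :
    ∀ᵐ x ∂μ, Function.Injective (quadraticScore s a · x) := by
  simp only [Function.Injective, ae_all_iff]
  intro i l
  obtain rfl | hil := eq_or_ne i l
  · simp
  let P : Polynomial ℝ := .C (s i - s l) * .X ^ 2 + .C (a (i, 1) - a (l, 1)) * .X +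
    .C (a (i, 0) - a (l, 0))
  have hP : P ≠ 0 := by
    refine Polynomial.ne_zero_of_degree_gt (n := 1) ?_
    rw [Polynomial.degree_quadratic (sub_ne_zero.2 (hs.ne hil))]
    norm_num
  have hnull := (Polynomial.finite_setOfPred_isRoot hP).measure_zero μ
  filter_upwards [measure_eq_zero_iff_ae_notMem.1 hnull] with x hx heq
  refine absurd ?_ hx
  rw [quadraticScore_apply, quadraticScore_apply] at heq
  simp only [Polynomial.IsRoot.def, P, Polynomial.eval_add, Polynomial.eval_mul,
    Polynomial.eval_C, Polynomial.eval_pow, Polynomial.eval_X]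
  linarith

variable [LinearOrder ι] {c : ℝ} {g : ι → ℝ}

/-- The difference of a later and an earlier score has a positive leading coefficient, hence is
convex. -/
lemma convex_dominatesLater_quadraticScore (hs : StrictMono s)
    (a : EuclideanSpace ℝ (ι × Fin 2)) (i : ι) :
    Convex ℝ (dominatesLater (fun i ↦ Icc c (g i)) (quadraticScore s a) i) := by
  have hdiff (l : ι) (hl : l > i) :
      Convex ℝ {x | quadraticScore s a l x ≤ quadraticScore s a i x} := by
    have hconv : ConvexOn ℝ univ fun x : ℝ ↦ (s l - s i) * x ^ 2 + (a (l, 1) - a (i, 1)) * x :=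
      ((even_two.convexOn_pow (𝕜 := ℝ)).smul (sub_nonneg.2 (hs hl).le)).add
        ((LinearMap.mulLeft ℝ (a (l, 1) - a (i, 1))).convexOn convex_univ)
    convert hconv.convex_le (a (i, 0) - a (l, 0)) using 1
    ext x
    simp only [quadraticScore_apply, mem_ofPred_eq, mem_univ, true_and]
    constructor <;> intro h <;> linarith
  rw [dominatesLater_eq_inter]
  exact (convex_Icc _ _).inter (convex_iInter₂ hdiff)

lemma isClosed_dominatesLater_quadraticScore (s : ι → ℝ) (a : EuclideanSpace ℝ (ι × Fin 2))
    (i : ι) : IsClosed (dominatesLater (fun i ↦ Icc c (g i)) (quadraticScore s a) i) := by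
  have hcont (l : ι) : Continuous (quadraticScore s a l) := by
    unfold quadraticScore lagrangianScore
    fun_prop
  rw [dominatesLater_eq_inter]
  exact isClosed_Icc.inter (isClosed_biInter fun l _ ↦ isClosed_le (hcont l) (hcont i))

variable [OrderTop ι] {μ : Measure ℝ} [NullSingletonClass μ]

lemma exists_hullParams_dominatesLater_ae_eq (hs : StrictMono s) (hc : ∀ i, c ≤ g i)
    (a : EuclideanSpace ℝ (ι × Fin 2)) :
    ∃ θ ∈ hullParams c g, ∀ i,
      dominatesLater (fun i ↦ Icc c (g i)) (quadraticScore s a) i =ᵐ[μ]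
        Icc (θ i).1 (θ i).2 := by
  have hhull (i : ι) : ∃ p : ℝ × ℝ, p ∈ Icc c (g i) ×ˢ Icc c (g i) ∧
      (i = ⊤ → p = (c, g ⊤)) ∧
      dominatesLater (fun i ↦ Icc c (g i)) (quadraticScore s a) i =ᵐ[μ] Icc p.1 p.2 := by
    have hsub : dominatesLater (fun i ↦ Icc c (g i)) (quadraticScore s a) i ⊆ Icc c (g i) :=
      sep_subset _ _
    by_cases hi : i = ⊤
    · subst hi
      refine ⟨(c, g ⊤), ⟨left_mem_Icc.2 (hc ⊤), right_mem_Icc.2 (hc ⊤)⟩, fun _ ↦ rfl, ?_⟩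
      refine .of_eq (hsub.antisymm fun x hx ↦ ⟨hx, fun l hl ↦ absurd hl not_top_lt⟩)
    obtain hempty | hne := eq_empty_or_nonempty
      (dominatesLater (fun i ↦ Icc c (g i)) (quadraticScore s a) i)
    · have hmem : c ∈ Icc c (g i) := left_mem_Icc.2 (hc i)
      refine ⟨(c, c), ⟨hmem, hmem⟩, fun h ↦ absurd h hi, ?_⟩
      rw [hempty, Icc_self]
      exact (ae_eq_empty.2 (measure_singleton c)).symm
    · obtain ⟨p, hp, q, hq, heq⟩ := exists_eq_Icc_of_convex_of_isClosed_of_subset_Icc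
        (convex_dominatesLater_quadraticScore hs a i)
        (isClosed_dominatesLater_quadraticScore s a i) hne hsub
      exact ⟨(p, q), ⟨hp, hq⟩, fun h ↦ absurd h hi, .of_eq heq⟩
  choose θ hmem htop heq using hhull
  exact ⟨θ, ⟨fun i _ ↦ hmem i, htop ⊤ rfl⟩, heq⟩

lemma exists_hullParams_bestCell_ae_eq [Finite ι] (hs : StrictMono s) (hg : Monotone g)
    (hc : ∀ i, c ≤ g i) (a : EuclideanSpace ℝ (ι × Fin 2)) :
    ∃ θ ∈ hullParams c g, ∀ i,
      bestCell (fun i ↦ Icc c (g i)) (quadraticScore s a) i =ᵐ[μ] laminarCell θ i := by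
  obtain ⟨θ, hθ, heq⟩ := exists_hullParams_dominatesLater_ae_eq (μ := μ) hs hc a
  have hT : Monotone fun i ↦ Icc c (g i) := fun i j hij ↦ Icc_subset_Icc_right (hg hij)
  refine ⟨θ, hθ, fun i ↦ .trans ?_ <| (heq i).diff <| .countable_iUnion fun l ↦
    .countable_iUnion fun _ ↦ (heq l).trans Ioo_ae_eq_Icc.symm⟩
  filter_upwards [ae_injective_quadraticScore hs.injective a] with x hx
  exact propext (mem_bestCell_iff_dominatesLater hT hx)

end QuadraticScores

lemma integrable_pow_of_ae_mem_Icc {μ : Measure ℝ} [IsFiniteMeasure μ] {c d : ℝ}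
    (hμ : ∀ᵐ x ∂μ, x ∈ Icc c d) (k : ℕ) : Integrable (fun x ↦ x ^ k) μ := by
  have h : IntegrableOn (fun x : ℝ ↦ x ^ k) (Icc c d) μ :=
    (continuous_pow k).continuousOn.integrableOn_compact isCompact_Icc
  rwa [IntegrableOn, Measure.restrict_eq_self_of_ae_mem hμ] at h

section LaminarMatching

variable {ι : Type*} [LinearOrder ι] [Finite ι] [OrderTop ι] {c : ℝ} {g : ι → ℝ}
  {μ : Measure ℝ} [IsFiniteMeasure μ] [NullSingletonClass μ] {S : ι → Set ℝ}

/-- The masses and first moments of the cells `S i`. -/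
def massMeanVector (μ : Measure ℝ) (S : ι → Set ℝ) : EuclideanSpace ℝ (ι × Fin 2) :=
  momentVector μ (fun (k : Fin 2) x ↦ x ^ (k : ℕ)) S

theorem exists_massMeanVector_laminarCell_eq (hg : Monotone g) (hc : ∀ i, c ≤ g i)
    (hS : IsSubordinatePartition μ (fun i ↦ Icc c (g i)) S) :
    ∃ θ ∈ hullParams c g, massMeanVector μ (laminarCell θ) = massMeanVector μ S := by
  have hμ : ∀ᵐ x ∂μ, x ∈ Icc c (g ⊤) := by
    filter_upwards [hS.ae_mem_iff] with x ⟨i, hx, _⟩ using Icc_subset_Icc_right (hg le_top) hx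
  have hint (k : ℕ) := integrable_pow_of_ae_mem_Icc hμ k
  obtain ⟨s⟩ := Order.embedding_from_countable_to_dense ι ℝ
  have hcompact : IsCompact ((fun θ ↦ massMeanVector μ (laminarCell θ)) '' hullParams c g) :=
    (isCompact_hullParams c g).image (continuous_momentVector_laminarCell fun k ↦ hint k)
  refine closure_minimal ?_ hcompact.isClosed <| momentVector_mem_closure_range_bestCell
    (ψ := fun i x ↦ s i * x ^ 2) (fun _ ↦ measurableSet_Icc) (by fun_prop)
    (fun i ↦ (hint 2).const_mul (s i)) (by fun_prop) (fun k ↦ hint k)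
    (ae_injective_quadraticScore s.injective) hS
  rintro _ ⟨a, rfl⟩
  obtain ⟨θ, hθ, heq⟩ := exists_hullParams_bestCell_ae_eq (μ := μ) s.strictMono hg hc a
  refine ⟨θ, hθ, PiLp.ext fun p ↦ ?_⟩
  exact (setIntegral_congr_set (heq p.1)).symm

end LaminarMatching

section Representations

lemma exists_mem_Icc_succ {α : Type*} [LinearOrder α] (γ : ℕ → α) (n : ℕ) [NeZero n] {x : α}
    (hx : x ∈ Icc (γ 0) (γ n)) : ∃ i < n, x ∈ Icc (γ i) (γ (i + 1)) := by
  induction n, NeZero.one_le (n := n) using Nat.le_induction with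
  | base => exact ⟨0, one_pos, hx⟩
  | succ n hn ih =>
    obtain h | h := le_total x (γ n)
    · have : NeZero n := ⟨Nat.one_le_iff_ne_zero.1 hn⟩
      obtain ⟨i, hi, hmem⟩ := ih ⟨hx.1, h⟩
      exact ⟨i, hi.trans n.lt_succ_self, hmem⟩
    · exact ⟨n, n.lt_succ_self, h, hx.2⟩

lemma val_top_add_one (n : ℕ) [NeZero n] : ((⊤ : Fin n) : ℕ) + 1 = n := by
  rw [Fin.val_top, Nat.sub_add_cancel NeZero.one_le]

variable {μ : Measure ℝ} {n : ℕ} {γ : ℕ → ℝ} {B : ℕ → Set ℝ}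

lemma monotone_cutoff_succ (hγ : MonotoneOn γ (Iic n)) : Monotone fun i : Fin n ↦ γ (i + 1) :=
  fun i j hij ↦ hγ i.2 j.2 (Nat.succ_le_succ hij)

lemma IsDetRep.isSubordinatePartition [NeZero n] (hB : IsDetRep μ n B) (hIC : IsIC n γ B)
    (hγ : MonotoneOn γ (Iic n)) (hμ : ∀ᵐ x ∂μ, x ∈ Icc (γ 0) (γ n)) :
    IsSubordinatePartition μ (fun i : Fin n ↦ Icc (γ 0) (γ (i + 1))) (fun i ↦ B i) where
  measurableSet i := (hB.1 i i.2).1.measurableSet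
  ae_mem_iff := by
    have hdisj : ∀ᵐ x ∂μ, ∀ i j : Fin n, i ≠ j → x ∉ B i ∩ B j := by
      simp only [ae_all_iff]
      exact fun i j hij ↦ measure_eq_zero_iff_ae_notMem.1 <|
        hB.2.2 i i.2 j j.2 (Fin.val_injective.ne hij)
    filter_upwards [hdisj, hμ] with x hx hxμ
    obtain ⟨i, hi, hxi⟩ := exists_mem_Icc_succ γ n hxμ
    obtain ⟨j, hj, hxj⟩ := mem_iUnion₂.1 (hIC i hi hxi)
    rw [Finset.mem_Ico] at hj
    have hle : γ (i + 1) ≤ γ (j + 1) := hγ hi hj.2 (Nat.succ_le_succ hj.1)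
    refine ⟨⟨j, hj.2⟩, ⟨hxμ.1, hxi.2.trans hle⟩, fun l ↦ ⟨fun hl ↦ ?_, fun hl ↦ hl ▸ hxj⟩⟩
    by_contra hne
    exact hx l ⟨j, hj.2⟩ hne ⟨hl, hxj⟩

/-- The laminar family with hulls `θ`, indexed by `ℕ` to match `IsDetRep`; the sets of index at
least `n` are junk. -/
def laminarRep (θ : Fin n → ℝ × ℝ) : ℕ → Set ℝ :=
  Function.extend Fin.val (laminarCell θ) fun _ ↦ ∅

lemma laminarRep_val (θ : Fin n → ℝ × ℝ) (i : Fin n) : laminarRep θ i = laminarCell θ i :=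
  Fin.val_injective.extend_apply _ _ _

section LaminarRep

variable [NeZero n] {θ : Fin n → ℝ × ℝ}

lemma isDetRep_laminarRep [NullSingletonClass μ] (hγ : MonotoneOn γ (Iic n)) (hγ0 : γ 0 = 0)
    (hγn : γ n = 1) (hθ : θ ∈ hullParams (γ 0) fun i : Fin n ↦ γ (i + 1)) :
    IsDetRep μ n (laminarRep θ) := by
  have hsub (i : Fin n) : laminarCell θ i ⊆ Icc 0 1 :=
    (laminarCell_subset_Icc hθ i).trans (Icc_subset_Icc hγ0.ge (hγn ▸ hγ i.2 self_mem_Iic i.2))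
  have hcover : ⋃ i ∈ Finset.range n, laminarRep θ i = ⋃ i : Fin n, laminarCell θ i := by
    ext x
    simp [Fin.exists_iff, ← laminarRep_val]
  refine ⟨fun i hi ↦ ?_, ?_, fun i hi j hj hij ↦ ?_⟩
  · rw [laminarRep_val θ ⟨i, hi⟩]
    exact ⟨isClosed_laminarCell θ _, hsub _⟩
  · rw [hcover]
    refine (iUnion_subset hsub).antisymm fun x hx ↦ ?_
    obtain ⟨j, -, hj⟩ := exists_ge_mem_laminarCell (i := 0) hθ
      (by rwa [val_top_add_one, hγ0, hγn]) (by simp)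
    exact mem_iUnion_of_mem j hj
  · rw [laminarRep_val θ ⟨i, hi⟩, laminarRep_val θ ⟨j, hj⟩]
    exact measure_laminarCell_inter θ (by simpa using hij)

lemma isIC_laminarRep (hγ : MonotoneOn γ (Iic n))
    (hθ : θ ∈ hullParams (γ 0) fun i : Fin n ↦ γ (i + 1)) : IsIC n γ (laminarRep θ) := by
  intro i hi x hx
  have hxγ : x ∈ Icc (γ 0) (γ ((⊤ : Fin n) + 1)) := by
    rw [val_top_add_one]
    exact ⟨(hγ (Nat.zero_le _) hi.le (Nat.zero_le _)).trans hx.1,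
      hx.2.trans (hγ hi self_mem_Iic hi)⟩
  obtain ⟨j, hij, hj⟩ := exists_ge_mem_laminarCell (i := ⟨i, hi⟩) hθ hxγ fun l hl ↦
    (hγ l.2 hi.le hl).trans hx.1
  exact mem_iUnion₂.2 ⟨j, Finset.mem_Ico.2 ⟨hij, j.2⟩, laminarRep_val θ j ▸ hj⟩

end LaminarRep

lemma massMeanVector_mass (μ : Measure ℝ) {ι : Type*} (S : ι → Set ℝ) (i : ι) :
    massMeanVector μ S (i, 0) = μ.real (S i) := by
  simp [massMeanVector, momentVector]

lemma massMeanVector_mean (μ : Measure ℝ) {ι : Type*} (S : ι → Set ℝ) (i : ι) :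
    massMeanVector μ S (i, 1) = ∫ x in S i, x ∂μ := by
  simp [massMeanVector, momentVector]

lemma payoff_eq_sum_massMeanVector (μ : Measure ℝ) (v : ℕ → ℝ) (B : ℕ → Set ℝ) :
    payoff μ n v B = ∑ i : Fin n, v i * massMeanVector μ (fun i : Fin n ↦ B i) (i, 0) := by
  simp only [payoff, Finset.sum_range, massMeanVector_mass, Measure.real]

/-- Obedience as a closed condition on masses and first moments. -/
def obedientVectors (n : ℕ) (γ : ℕ → ℝ) : Set (EuclideanSpace ℝ (Fin n × Fin 2)) :=
  {y | ∀ i : Fin n, γ i * y (i, 0) ≤ y (i, 1) ∧ y (i, 1) ≤ γ (i + 1) * y (i, 0)}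

lemma isClosed_obedientVectors (n : ℕ) (γ : ℕ → ℝ) : IsClosed (obedientVectors n γ) := by
  simp only [obedientVectors, ofPred_forall, ofPred_and]
  exact isClosed_iInter fun i ↦
    .inter (isClosed_le (by fun_prop) (by fun_prop)) (isClosed_le (by fun_prop) (by fun_prop))

variable [IsFiniteMeasure μ]

lemma isObedient_iff_massMeanVector_mem :
    IsObedient μ n γ B ↔ massMeanVector μ (fun i : Fin n ↦ B i) ∈ obedientVectors n γ := by
  simp only [IsObedient, obedientVectors, mem_ofPred_eq, Fin.forall_iff, massMeanVector_mass,
    massMeanVector_mean]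
  refine forall₂_congr fun i _ ↦ ?_
  obtain hzero | hne := eq_or_ne (μ (B i)) 0
  · simp [hzero, Measure.real, Measure.restrict_eq_zero.2 hzero]
  · have hpos : 0 < μ.real (B i) := ENNReal.toReal_pos hne (measure_ne_top _ _)
    rw [condMean, mem_Icc, ← Measure.real, le_div_iff₀ hpos, div_le_iff₀ hpos]
    simp [hne]

lemma isObedient_of_ae_mem_Icc
    (h : ∀ i < n, ∀ᵐ x ∂μ.restrict (B i), x ∈ Icc (γ i) (γ (i + 1))) : IsObedient μ n γ B := by
  intro i hi hne
  have hint : IntegrableOn (fun x ↦ x) (B i) μ := by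
    simpa [IntegrableOn] using integrable_pow_of_ae_mem_Icc (h i hi) 1
  have hmean : condMean μ (B i) = ⨍ x in B i, x ∂μ := by
    rw [setAverage_eq, condMean, smul_eq_mul, div_eq_inv_mul, Measure.real]
  rw [hmean]
  exact (convex_Icc _ _).set_average_mem isClosed_Icc hne (measure_ne_top _ _) (h i hi) hint

variable [NullSingletonClass μ] [NeZero n]

/-- With hulls `[γ 0, γ (i + 1)]`, the laminar family is full disclosure up to a null set. -/
lemma exists_isObedient_laminarRep (hγ : MonotoneOn γ (Iic n)) :
    ∃ θ ∈ hullParams (γ 0) (fun i : Fin n ↦ γ (i + 1)), IsObedient μ n γ (laminarRep θ) := by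
  have hle (i : Fin n) : γ 0 ≤ γ (i + 1) := hγ (Nat.zero_le _) i.2 (Nat.zero_le _)
  refine ⟨fun i ↦ (γ 0, γ (i + 1)), ⟨fun i _ ↦ ⟨left_mem_Icc.2 (hle i), right_mem_Icc.2 (hle i)⟩,
    rfl⟩, isObedient_of_ae_mem_Icc fun i hi ↦ ?_⟩
  rw [laminarRep_val _ ⟨i, hi⟩]
  filter_upwards [ae_restrict_mem (isClosed_laminarCell _ _).measurableSet,
    ae_restrict_of_ae (Measure.ae_ne μ (γ 0))] with x hx hx0
  obtain ⟨hhull, hlater⟩ := mem_laminarCell.1 hx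
  refine ⟨?_, hhull.2⟩
  cases i with
  | zero => exact hhull.1
  | succ l =>
    by_contra! hlt
    exact hlater ⟨l, l.lt_succ_self.trans hi⟩ l.lt_succ_self ⟨hhull.1.lt_of_ne' hx0, hlt⟩

lemma isCompact_massMeanVector_isIC (hγ : MonotoneOn γ (Iic n)) (hγ0 : γ 0 = 0) (hγn : γ n = 1)
    (hμ : ∀ᵐ x ∂μ, x ∈ Icc (0 : ℝ) 1) :
    IsCompact {y | ∃ B, IsDetRep μ n B ∧ IsIC n γ B ∧
      massMeanVector μ (fun i : Fin n ↦ B i) = y} := by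
  have himage : IsCompact ((fun θ : Fin n → ℝ × ℝ ↦ massMeanVector μ (laminarCell θ)) ''
      hullParams (γ 0) fun i : Fin n ↦ γ (i + 1)) :=
    (isCompact_hullParams _ _).image
      (continuous_momentVector_laminarCell fun k ↦ integrable_pow_of_ae_mem_Icc hμ k)
  convert himage using 1
  ext y
  constructor
  · rintro ⟨B, hB, hIC, rfl⟩
    exact exists_massMeanVector_laminarCell_eq (monotone_cutoff_succ hγ)
      (fun i ↦ hγ (Nat.zero_le _) i.2 (Nat.zero_le _))
      (hB.isSubordinatePartition hIC hγ (by rwa [hγ0, hγn]))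
  · rintro ⟨θ, hθ, rfl⟩
    exact ⟨laminarRep θ, isDetRep_laminarRep hγ hγ0 hγn hθ, isIC_laminarRep hγ hθ,
      by simp only [laminarRep_val]⟩

end Representations

theorem optimal_representation_exists_general (μ : Measure ℝ) [IsFiniteMeasure μ]
    [NullSingletonClass μ] (hμ : ∀ᵐ x ∂μ, x ∈ Icc (0 : ℝ) 1) (n : ℕ) (γ : ℕ → ℝ)
    (hγ0 : γ 0 = 0) (hγn : γ n = 1) (hγ : MonotoneOn γ (Iic n)) (v : ℕ → ℝ) :
    ∃ B : ℕ → Set ℝ, IsDetRep μ n B ∧ IsObedient μ n γ B ∧ IsIC n γ B ∧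
      ∀ B' : ℕ → Set ℝ, IsDetRep μ n B' → IsObedient μ n γ B' → IsIC n γ B' →
        payoff μ n v B' ≤ payoff μ n v B := by
  have : NeZero n := ⟨by rintro rfl; exact zero_ne_one (hγ0.symm.trans hγn)⟩
  have hcompact := (isCompact_massMeanVector_isIC hγ hγ0 hγn hμ).inter_right
    (isClosed_obedientVectors n γ)
  obtain ⟨θ, hθ, hθo⟩ := exists_isObedient_laminarRep (μ := μ) hγ
  have hpayoff : Continuous fun y : EuclideanSpace ℝ (Fin n × Fin 2) ↦
      ∑ i : Fin n, v i * y (i, 0) := by fun_prop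
  obtain ⟨_, ⟨⟨B, hB, hIC, rfl⟩, hBo⟩, hmax⟩ := hcompact.exists_isMaxOn
    ⟨_, ⟨laminarRep θ, isDetRep_laminarRep hγ hγ0 hγn hθ, isIC_laminarRep hγ hθ, rfl⟩,
      isObedient_iff_massMeanVector_mem.1 hθo⟩ hpayoff.continuousOn
  refine ⟨B, hB, isObedient_iff_massMeanVector_mem.2 hBo, hIC, fun B' hB' hB'o hIC' ↦ ?_⟩
  rw [payoff_eq_sum_massMeanVector, payoff_eq_sum_massMeanVector]
  exact hmax ⟨⟨B', hB', hIC', rfl⟩, isObedient_iff_massMeanVector_mem.1 hB'o⟩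

/-- the supremum of Sender's ex ante payoff over obedient and IC
deterministic representations is attained. -/
theorem optimal_representation_exists
    (f : ℝ → ℝ) (hf : IsPrior f)
    (n : ℕ) (hn : 2 ≤ n)
    (γ : ℕ → ℝ) (hγ0 : γ 0 = 0) (hγn : γ n = 1)
    (hγ : ∀ i < n, γ i < γ (i+1))
    (v : ℕ → ℝ) (hv0 : v 0 = 0) (hv : ∀ i, i + 1 < n → v i < v (i+1)) :
    ∃ B : ℕ → Set ℝ, IsDetRep (densMeasure f) n B ∧
      IsObedient (densMeasure f) n γ B ∧ IsIC n γ B ∧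
      ∀ B' : ℕ → Set ℝ, IsDetRep (densMeasure f) n B' →
        IsObedient (densMeasure f) n γ B' → IsIC n γ B' →
        payoff (densMeasure f) n v B' ≤ payoff (densMeasure f) n v B := by
  have hac : densMeasure f ≪ volume.restrict (Icc 0 1) := withDensity_absolutelyContinuous _ _
  have : IsProbabilityMeasure (densMeasure f) := ⟨hf.prob⟩
  have : NullSingletonClass (densMeasure f) := ⟨fun x ↦ hac (measure_singleton x)⟩
  have hmono : MonotoneOn γ (Iic n) :=
    monotoneOn_of_le_add_one ordConnected_Iic fun i _ _ hi ↦ (hγ i hi).le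
  exact optimal_representation_exists_general _ (hac.ae_le (ae_restrict_mem measurableSet_Icc))
    n γ hγ0 hγn hmono v

end VerifiableDisclosure
end
end

section
/- Let R_S be the maximal Sender's ex ante payoff over all obedient and incentive compatible deterministic representations, and let R_U = ∑_{i=0}^{n−1} v_i μ_F(A_i) be the unraveling payoff (the payoff of the deterministic representation {A_i}_{i=0}^{n−1}). Then R_S > R_U. -/
open MeasureTheory Set

noncomputable section

namespace VerifiableDisclosure

/-! Lower one interior cutoff `γ (k + 1)` slightly, to `c`, and let the cells of the new cutoffs
represent the actions. The states in `[c, γ (k + 1)]` move from action `k` to the better paid action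
`k + 1`, so the Sender gains. Incentive compatibility survives because states only move upwards.
Obedience of cell `k + 1` survives because the mean of the prior on `[γ (k + 1), γ (k + 2)]` lies
strictly above `γ (k + 1)`, which leaves room for a small pool from below. -/

open scoped Topology

section Prior

instance instNullSingletonClassDensMeasure (f : ℝ → ℝ) : NullSingletonClass (densMeasure f) := by
  unfold densMeasure
  infer_instance

lemma IsPrior.isProbabilityMeasure {f : ℝ → ℝ} (hf : IsPrior f) :
    IsProbabilityMeasure (densMeasure f) :=
  ⟨hf.prob⟩

lemma IsPrior.volume_restrict_absolutelyContinuous {f : ℝ → ℝ} (hf : IsPrior f) :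
    volume.restrict (Icc 0 1) ≪ densMeasure f := by
  refine withDensity_absolutelyContinuous' hf.meas.ennreal_ofReal.aemeasurable ?_
  filter_upwards [ae_restrict_mem measurableSet_Icc] with x hx
  exact (ENNReal.ofReal_pos.2 (hf.pos x hx)).ne'

lemma IsPrior.densMeasure_Icc_ne_zero {f : ℝ → ℝ} (hf : IsPrior f) {a b : ℝ} (hab : a < b)
    (ha : a < 1) (hb : 0 < b) : densMeasure f (Icc a b) ≠ 0 := by
  have hvolume : 0 < volume.restrict (Icc 0 1) (Icc a b) := by
    rw [Measure.restrict_apply measurableSet_Icc, Icc_inter_Icc, Real.volume_Icc,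
      ENNReal.ofReal_pos, sub_pos]
    exact max_lt (lt_min hab ha) (lt_min hb one_pos)
  exact fun h => hvolume.ne' (hf.volume_restrict_absolutelyContinuous h)

end Prior

section ConditionalMean

variable {μ : Measure ℝ}

lemma condMean_eq_setAverage (s : Set ℝ) : condMean μ s = ⨍ ω in s, ω ∂μ := by
  rw [setAverage_eq, smul_eq_mul, inv_mul_eq_div]
  rfl

lemma condMean_mem_Icc [IsLocallyFiniteMeasure μ] {a b : ℝ} (h : μ (Icc a b) ≠ 0) :
    condMean μ (Icc a b) ∈ Icc a b := by
  rw [condMean_eq_setAverage]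
  exact (convex_Icc a b).set_average_mem isClosed_Icc h isCompact_Icc.measure_ne_top
    (ae_restrict_mem measurableSet_Icc) continuous_id.integrableOn_Icc

lemma le_condMean_iff {s : Set ℝ} {g : ℝ} (h0 : μ s ≠ 0) (htop : μ s ≠ ⊤)
    (hint : IntegrableOn (fun ω => ω) s μ) :
    g ≤ condMean μ s ↔ 0 ≤ ∫ ω in s, (ω - g) ∂μ := by
  rw [condMean, le_div_iff₀ (ENNReal.toReal_pos h0 htop),
    integral_sub hint (integrableOn_const htop), setIntegral_const, smul_eq_mul, sub_nonneg,
    mul_comm, Measure.real]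

lemma integral_Icc_sub_left_pos [IsLocallyFiniteMeasure μ] [NullSingletonClass μ] {g b : ℝ}
    (h : μ (Icc g b) ≠ 0) : 0 < ∫ ω in Icc g b, (ω - g) ∂μ := by
  have hnonneg : 0 ≤ᵐ[μ.restrict (Icc g b)] fun ω => ω - g := by
    filter_upwards [ae_restrict_mem measurableSet_Icc] with ω hω
    exact sub_nonneg.2 hω.1
  have hint : IntegrableOn (fun ω => ω - g) (Icc g b) μ :=
    (continuous_id.sub continuous_const).integrableOn_Icc
  have hsupport : Function.support (fun ω => ω - g) ∩ Icc g b = Icc g b \ {g} := by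
    rw [sdiff_eq, inter_comm]
    congr 1
    ext ω
    simp [sub_eq_zero]
  rw [setIntegral_pos_iff_support_of_nonneg_ae hnonneg hint, hsupport,
    measure_sdiff_null (measure_singleton g)]
  exact pos_iff_ne_zero.2 h

lemma eventually_le_condMean_Icc [IsLocallyFiniteMeasure μ] [NullSingletonClass μ] {g b : ℝ}
    (h : μ (Icc g b) ≠ 0) : ∀ᶠ c in 𝓝[<] g, g ≤ condMean μ (Icc c b) := by
  have hgb : g ≤ b := nonempty_Icc.1 (nonempty_of_measure_ne_zero h)
  have integral_eq {c : ℝ} (hc : c ≤ g) :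
      ∫ ω in Icc c b, (ω - g) ∂μ = -∫ ω in b..c, (ω - g) ∂μ := by
    rw [integral_Icc_eq_integral_Ioc, ← intervalIntegral.integral_of_le (hc.trans hgb),
      intervalIntegral.integral_symm]
  have hcont : Continuous fun c => -∫ ω in b..c, (ω - g) ∂μ :=
    (intervalIntegral.continuous_primitive
      (fun _ _ => (continuous_id.sub continuous_const).intervalIntegrable _ _) b).neg
  have hpos : 0 < -∫ ω in b..g, (ω - g) ∂μ := integral_eq le_rfl ▸ integral_Icc_sub_left_pos h
  filter_upwards [self_mem_nhdsWithin,
    nhdsWithin_le_nhds (hcont.continuousAt.eventually_const_lt hpos)] with c hcg hc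
  have hc0 : μ (Icc c b) ≠ 0 :=
    fun h0 => h (measure_mono_null (Icc_subset_Icc_left (le_of_lt hcg)) h0)
  rw [le_condMean_iff hc0 isCompact_Icc.measure_ne_top continuous_id.integrableOn_Icc,
    integral_eq (le_of_lt hcg)]
  exact hc.le

end ConditionalMean

section Cutoffs

lemma biUnion_Ico_Icc_succ {α : Type*} [LinearOrder α] {γ : ℕ → α} {m n : ℕ} (hmn : m < n)
    (hγ : MonotoneOn γ (Icc m n)) :
    ⋃ i ∈ Finset.Ico m n, Icc (γ i) (γ (i + 1)) = Icc (γ m) (γ n) := by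
  induction n, Nat.succ_le_of_lt hmn using Nat.le_induction with
  | base => simp
  | succ n hmn' ih =>
    have hlt : m < n := Nat.lt_of_succ_le hmn'
    rw [← Finset.insert_Ico_right_eq_Ico_add_one hlt.le, Finset.set_biUnion_insert,
      ih hlt (hγ.mono (Icc_subset_Icc_right n.le_succ)), union_comm]
    exact Icc_union_Icc_eq_Icc (hγ ⟨le_rfl, hmn.le⟩ ⟨hlt.le, n.le_succ⟩ hlt.le)
      (hγ ⟨hlt.le, n.le_succ⟩ ⟨hmn.le, le_rfl⟩ n.le_succ)

lemma monotoneOn_update {ι α : Type*} [LinearOrder ι] [Preorder α] {f : ι → α} {s : Set ι}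
    {i : ι} {a : α} (hf : MonotoneOn f s) (hlt : ∀ j ∈ s, j < i → f j ≤ a)
    (hgt : ∀ j ∈ s, i < j → a ≤ f j) : MonotoneOn (Function.update f i a) s := by
  intro j hj l hl hjl
  obtain hji | hji := eq_or_ne j i <;> obtain hli | hli := eq_or_ne l i
  · simp [hji, hli]
  · simpa [hji, hli] using hgt l hl ((hji ▸ hjl).lt_of_ne' hli)
  · simpa [hji, hli] using hlt j hj ((hli ▸ hjl).lt_of_ne hji)
  · simpa [hji, hli] using hf hj hl hjl

/-- The interval of states between consecutive cutoffs, the paper's `A i`; `cutoffCells γ` is the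
unraveling representation. -/
abbrev cutoffCells (γ : ℕ → ℝ) (i : ℕ) : Set ℝ := Icc (γ i) (γ (i + 1))

variable {μ : Measure ℝ} {n : ℕ} {γ δ : ℕ → ℝ}

lemma measure_cutoffCells_inter [NullSingletonClass μ] (hγ : MonotoneOn γ (Iic n)) {i j : ℕ}
    (hij : i < j) (hj : j ≤ n) : μ (cutoffCells γ i ∩ cutoffCells γ j) = 0 := by
  refine measure_mono_null (fun ω hω => ?_) (measure_singleton (γ (i + 1)))
  exact le_antisymm hω.1.2 ((hγ (hij.trans_le hj : i + 1 ≤ n) hj hij).trans hω.2.1)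

lemma isDetRep_cutoffCells [NullSingletonClass μ] (hγ0 : γ 0 = 0) (hγn : γ n = 1)
    (hγ : MonotoneOn γ (Iic n)) : IsDetRep μ n (cutoffCells γ) := by
  have hn : 0 < n := Nat.pos_of_ne_zero fun h => zero_ne_one (hγ0.symm.trans (h ▸ hγn))
  have hcover : ⋃ i ∈ Finset.range n, cutoffCells γ i = Icc 0 1 := by
    rw [Finset.range_eq_Ico, biUnion_Ico_Icc_succ hn (hγ.mono Icc_subset_Iic_self), hγ0, hγn]
  refine ⟨fun i hi => ⟨isClosed_Icc, ?_⟩, hcover, fun i hi j hj hij => ?_⟩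
  · exact hcover ▸ subset_biUnion_of_mem (u := cutoffCells γ) (Finset.mem_range.2 hi)
  · rcases hij.lt_or_gt with hlt | hgt
    · exact measure_cutoffCells_inter hγ hlt hj.le
    · exact inter_comm (cutoffCells γ i) _ ▸ measure_cutoffCells_inter hγ hgt hi.le

lemma isIC_cutoffCells_of_le (hγ : MonotoneOn γ (Iic n)) (hδ : MonotoneOn δ (Iic n))
    (hle : ∀ i < n, δ i ≤ γ i) (hn : γ n ≤ δ n) : IsIC n γ (cutoffCells δ) := by
  intro i hi
  rw [biUnion_Ico_Icc_succ hi (hδ.mono Icc_subset_Iic_self)]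
  exact Icc_subset_Icc (hle i hi) ((hγ hi (mem_Iic.2 le_rfl) hi).trans hn)

lemma isObedient_cutoffCells_of_le [IsLocallyFiniteMeasure μ]
    (hle : ∀ i < n, δ (i + 1) ≤ γ (i + 1))
    (hmean : ∀ i < n, μ (cutoffCells δ i) ≠ 0 → γ i ≤ condMean μ (cutoffCells δ i)) :
    IsObedient μ n γ (cutoffCells δ) :=
  fun i hi h0 => ⟨hmean i hi h0, (condMean_mem_Icc h0).2.trans (hle i hi)⟩

lemma measureReal_Icc_add_Icc [IsLocallyFiniteMeasure μ] [NullSingletonClass μ] {a b c : ℝ}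
    (hab : a ≤ b) (hbc : b ≤ c) : μ.real (Icc a b) + μ.real (Icc b c) = μ.real (Icc a c) := by
  have hdisj : AEDisjoint μ (Icc a b) (Icc b c) :=
    measure_mono_null (fun ω hω => le_antisymm hω.1.2 hω.2.1) (measure_singleton b)
  rw [← Icc_union_Icc_eq_Icc hab hbc,
    measureReal_union₀ measurableSet_Icc.nullMeasurableSet hdisj
      isCompact_Icc.measure_ne_top isCompact_Icc.measure_ne_top]

lemma payoff_cutoffCells_update [IsLocallyFiniteMeasure μ] [NullSingletonClass μ] {k : ℕ}
    (hk : k + 1 < n) {c : ℝ} (hkc : γ k ≤ c) (hck : c ≤ γ (k + 1)) (hk2 : γ (k + 1) ≤ γ (k + 2))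
    (v : ℕ → ℝ) :
    payoff μ n v (cutoffCells (Function.update γ (k + 1) c)) =
      payoff μ n v (cutoffCells γ) + (v (k + 1) - v k) * μ.real (Icc c (γ (k + 1))) := by
  have hunchanged (i : ℕ) (hi : i ∉ ({k, k + 1} : Finset ℕ)) :
      cutoffCells (Function.update γ (k + 1) c) i = cutoffCells γ i := by
    simp only [Finset.mem_insert, Finset.mem_singleton, not_or] at hi
    simp [cutoffCells, hi.1, hi.2]
  have hpair : ({k, k + 1} : Finset ℕ) ⊆ Finset.range n := by
    simpa [Finset.insert_subset_iff] using ⟨by lia, hk⟩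
  rw [← sub_eq_iff_eq_add', payoff, payoff, ← Finset.sum_sub_distrib,
    ← Finset.sum_subset hpair fun i _ hi => by rw [hunchanged i hi, sub_self],
    Finset.sum_pair k.lt_succ_self.ne]
  have hlower := measureReal_Icc_add_Icc (μ := μ) hkc hck
  have hupper := measureReal_Icc_add_Icc (μ := μ) hck hk2
  simp only [cutoffCells, Function.update_self, ne_eq, Nat.left_eq_add, one_ne_zero,
    not_false_eq_true, Function.update_of_ne, Nat.add_eq_left, ← measureReal_def,
    ← hlower, ← hupper]
  ring

end Cutoffs

theorem optimal_payoff_gt_unraveling_general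
    {μ : Measure ℝ} [IsLocallyFiniteMeasure μ] [NullSingletonClass μ] {n k : ℕ} (hk : k + 1 < n)
    {γ : ℕ → ℝ} (hγ0 : γ 0 = 0) (hγn : γ n = 1) (hγ : MonotoneOn γ (Iic n))
    (hγk : γ k < γ (k + 1))
    (hbelow : ∀ a < γ (k + 1), μ (Icc a (γ (k + 1))) ≠ 0)
    (habove : μ (Icc (γ (k + 1)) (γ (k + 2))) ≠ 0)
    {v : ℕ → ℝ} (hv : v k < v (k + 1)) :
    ∃ B : ℕ → Set ℝ, IsDetRep μ n B ∧ IsObedient μ n γ B ∧ IsIC n γ B ∧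
      payoff μ n v (cutoffCells γ) < payoff μ n v B := by
  obtain ⟨c, ⟨hkc, hck⟩, hmean⟩ :=
    ((Filter.eventually_mem_set.2 (Ioo_mem_nhdsLT hγk)).and
      (eventually_le_condMean_Icc habove)).exists
  set δ := Function.update γ (k + 1) c
  have hδ_self : δ (k + 1) = c := Function.update_self ..
  have hδ_of_ne {i : ℕ} (hi : i ≠ k + 1) : δ i = γ i := Function.update_of_ne hi ..
  have hδ_le : δ ≤ γ := update_le_self_iff.2 hck.le
  have hδ : MonotoneOn δ (Iic n) := monotoneOn_update hγ
    (fun j hj hjk => (hγ hj (by simp; lia) (Nat.le_of_lt_succ hjk)).trans hkc.le)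
    (fun j hj hjk => hck.le.trans (hγ hk.le hj hjk.le))
  refine ⟨cutoffCells δ, isDetRep_cutoffCells ?_ ?_ hδ, ?_, ?_, ?_⟩
  · rw [hδ_of_ne (by lia), hγ0]
  · rw [hδ_of_ne hk.ne', hγn]
  · refine isObedient_cutoffCells_of_le (fun i _ => hδ_le _) fun i _ h0 => ?_
    rcases eq_or_ne i (k + 1) with rfl | hi
    · rwa [cutoffCells, hδ_self, hδ_of_ne (by lia)]
    · exact (hδ_of_ne hi).ge.trans (condMean_mem_Icc h0).1
  · exact isIC_cutoffCells_of_le hγ hδ (fun i _ => hδ_le i) (hδ_of_ne hk.ne').ge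
  · rw [payoff_cutoffCells_update hk hkc.le hck.le (hγ hk.le (Nat.succ_le_of_lt hk) (by lia))]
    have hmass : 0 < μ.real (Icc c (γ (k + 1))) :=
      ENNReal.toReal_pos (hbelow c hck) isCompact_Icc.measure_ne_top
    exact lt_add_of_pos_right _ (mul_pos (sub_pos.2 hv) hmass)

lemma IsPrior.exists_payoff_gt_cutoffCells {f : ℝ → ℝ} (hf : IsPrior f) {n k : ℕ} (hk : k + 1 < n)
    {γ : ℕ → ℝ} (hγ0 : γ 0 = 0) (hγn : γ n = 1) (hγ : ∀ i < n, γ i < γ (i + 1))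
    {v : ℕ → ℝ} (hv : v k < v (k + 1)) :
    ∃ B : ℕ → Set ℝ, IsDetRep (densMeasure f) n B ∧ IsObedient (densMeasure f) n γ B ∧
      IsIC n γ B ∧ payoff (densMeasure f) n v (cutoffCells γ) < payoff (densMeasure f) n v B := by
  have := hf.isProbabilityMeasure
  have hγ_strict : StrictMonoOn γ (Iic n) :=
    strictMonoOn_of_lt_add_one ordConnected_Iic fun i _ _ hi => hγ i hi
  have hpos : 0 < γ (k + 1) := hγ0 ▸ hγ_strict (mem_Iic.2 n.zero_le) hk.le k.succ_pos
  have hlt_one : γ (k + 1) < 1 := hγn ▸ hγ_strict hk.le (mem_Iic.2 le_rfl) hk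
  have hstep : γ (k + 1) < γ (k + 2) := hγ (k + 1) hk
  exact optimal_payoff_gt_unraveling_general hk hγ0 hγn hγ_strict.monotoneOn (hγ k (by lia))
    (fun a ha => hf.densMeasure_Icc_ne_zero ha (ha.trans hlt_one) hpos)
    (hf.densMeasure_Icc_ne_zero hstep hlt_one (hpos.trans hstep)) hv

/-- the maximal Sender payoff strictly exceeds the unraveling payoff. -/
theorem optimal_payoff_gt_unraveling
    (f : ℝ → ℝ) (hf : IsPrior f)
    (n : ℕ) (hn : 2 ≤ n)
    (γ : ℕ → ℝ) (hγ0 : γ 0 = 0) (hγn : γ n = 1)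
    (hγ : ∀ i < n, γ i < γ (i+1))
    (v : ℕ → ℝ) (hv0 : v 0 = 0) (hv : ∀ i, i + 1 < n → v i < v (i+1))
    (B : ℕ → Set ℝ)
    (hdet : IsDetRep (densMeasure f) n B)
    (hob : IsObedient (densMeasure f) n γ B)
    (hic : IsIC n γ B)
    (hmax : ∀ B' : ℕ → Set ℝ, IsDetRep (densMeasure f) n B' →
      IsObedient (densMeasure f) n γ B' → IsIC n γ B' →
      payoff (densMeasure f) n v B' ≤ payoff (densMeasure f) n v B) :
    payoff (densMeasure f) n v (fun i => Icc (γ i) (γ (i+1))) <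
      payoff (densMeasure f) n v B := by
  obtain ⟨B', hdet', hob', hic', hlt⟩ := hf.exists_payoff_gt_cutoffCells hn hγ0 hγn hγ (hv 0 hn)
  exact hlt.trans_le (hmax B' hdet' hob' hic')

end VerifiableDisclosure
end
end

section
/- Let R_S be the maximal Sender's ex ante payoff over all obedient and incentive compatible deterministic representations, and let R_U = ∑_{i=0}^{n−1} v_i μ_F(A_i) be the unraveling payoff. Then for every R with R_U ≤ R ≤ R_S, there exists an obedient and incentive compatible laminar representation whose Sender's ex ante payoff equals R. -/
/-!
A deterministic representation splits the prior `μ` into one measure per action, and only the mass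
and the first moment of each part matter for the payoff and for obedience.

To find a feasible split with payoff `R`, use the given representation on the states above a
threshold `t` and the unraveling one below it. Truncating a measure to `(t, ∞)` keeps its mean
above any lower bound of the original mean, and the unraveling parts satisfy their lower bounds
pointwise, so the hybrid is feasible for every `t`. Its payoff is continuous in `t`, and the
intermediate value theorem applies.

A feasible split is made laminar from the lowest action up. Since `μ` has no atoms, the part of
action `0` can be replaced by the restriction of `μ` to an interval `[a, b]`, with the same mass and
first moment. The mass that the other actions lose inside `[a, b]` is compensated by what action
`0` releases outside. Each of these actions is given a nonnegative combination of the released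
pieces to the left of `a` and to the right of `b`: this is possible because its lost mass has its
mean in `[a, b]`, so the linear system for the two coefficients has a nonnegative solution. The
states released by action `0` lie below every higher cutoff, so the argument can be iterated.
-/

open MeasureTheory Set

noncomputable section

namespace VerifiableDisclosure

/-- Equality of the total mass and of the first moment `∫ x` of two measures, so that nonzero
finite measures in this relation have the same barycenter. -/
structure SameMoments (κ κ' : Measure ℝ) : Prop where
  mass : κ.real univ = κ'.real univ
  moment : ∫ x, x ∂κ = ∫ x, x ∂κ'

theorem SameMoments.trans {κ κ' κ'' : Measure ℝ} (h : SameMoments κ κ') (h' : SameMoments κ' κ'') :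
    SameMoments κ κ'' :=
  ⟨h.mass.trans h'.mass, h.moment.trans h'.moment⟩

theorem sameMoments_add_left_iff {κ η η' : Measure ℝ} [IsFiniteMeasure κ] [IsFiniteMeasure η]
    [IsFiniteMeasure η'] (hκ : Integrable (fun x => x) κ) (hη : Integrable (fun x => x) η)
    (hη' : Integrable (fun x => x) η') :
    SameMoments (κ + η) (κ + η') ↔ SameMoments η η' := by
  have hmass : (κ + η).real univ = (κ + η').real univ ↔ η.real univ = η'.real univ := by
    rw [measureReal_add_apply, measureReal_add_apply, add_right_inj]
  have hmoment : ∫ x, x ∂(κ + η) = ∫ x, x ∂(κ + η') ↔ ∫ x, x ∂η = ∫ x, x ∂η' := by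
    rw [integral_add_measure hκ hη, integral_add_measure hκ hη', add_right_inj]
  exact ⟨fun h => ⟨hmass.1 h.mass, hmoment.1 h.moment⟩,
    fun h => ⟨hmass.2 h.mass, hmoment.2 h.moment⟩⟩

theorem setIntegral_le_integral_of_measure_le {α : Type*} [MeasurableSpace α] {ρ ν : Measure α}
    [IsFiniteMeasure ρ] (hle : ν ≤ ρ) {f : α → ℝ} {s : Set α} (hs : MeasurableSet s)
    (hfρ : IntegrableOn f s ρ) (hfν : Integrable f ν) {t : ℝ} (hin : ∀ x ∈ s, f x ≤ t)
    (hout : ∀ᵐ x ∂ν, x ∉ s → t ≤ f x) (hmass : ρ.real s = ν.real univ) :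
    ∫ x in s, f x ∂ρ ≤ ∫ x, f x ∂ν := by
  have : IsFiniteMeasure ν := isFiniteMeasure_of_le ρ hle
  have hin' : ∫ x in s, (t - f x) ∂ν ≤ ∫ x in s, (t - f x) ∂ρ :=
    integral_mono_measure (Measure.restrict_mono_measure hle s)
      ((ae_restrict_iff' hs).2 (.of_forall fun x hx => sub_nonneg.2 (hin x hx)))
      ((integrable_const t).sub hfρ)
  have hout' : ∫ x in sᶜ, (t - f x) ∂ν ≤ 0 :=
    integral_nonpos_of_ae ((ae_restrict_iff' hs.compl).2 (hout.mono fun x h hx =>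
      sub_nonpos.2 (h hx)))
  have hsplit := integral_add_compl hs ((integrable_const t).sub hfν)
  simp only [Pi.sub_apply] at hsplit
  rw [integral_sub (integrable_const t) hfν, integral_const] at hsplit
  rw [integral_sub (integrable_const t) hfρ, integral_const] at hin'
  simp only [measureReal_restrict_apply_univ, hmass, smul_eq_mul] at hin' hsplit
  linarith

section Interval

variable {ρ ν : Measure ℝ} [IsFiniteMeasure ρ] {c d : ℝ}

theorem setIntegral_Icc_le_integral (hle : ν ≤ ρ) (hν : ∀ᵐ x ∂ν, x ∈ Icc c d) {b : ℝ}
    (hmass : ρ.real (Icc c b) = ν.real univ) :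
    ∫ x in Icc c b, x ∂ρ ≤ ∫ x, x ∂ν :=
  have : IsFiniteMeasure ν := isFiniteMeasure_of_le ρ hle
  setIntegral_le_integral_of_measure_le hle measurableSet_Icc continuous_id.integrableOn_Icc
    (Integrable.of_mem_Icc c d aemeasurable_id hν) (fun _ hx => hx.2)
    (hν.mono fun _ hx hxs => le_of_not_ge fun h => hxs ⟨hx.1, h⟩) hmass

theorem integral_le_setIntegral_Icc (hle : ν ≤ ρ) (hν : ∀ᵐ x ∂ν, x ∈ Icc c d) {a : ℝ}
    (hmass : ρ.real (Icc a d) = ν.real univ) :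
    ∫ x, x ∂ν ≤ ∫ x in Icc a d, x ∂ρ := by
  have : IsFiniteMeasure ν := isFiniteMeasure_of_le ρ hle
  rw [← neg_le_neg_iff, ← integral_neg, ← integral_neg]
  exact setIntegral_le_integral_of_measure_le hle measurableSet_Icc continuous_neg.integrableOn_Icc
    (Integrable.of_mem_Icc c d aemeasurable_id hν).neg (fun _ hx => neg_le_neg hx.1)
    (hν.mono fun _ hx hxs => neg_le_neg <| le_of_not_ge fun h => hxs ⟨h, hx.2⟩) hmass

end Interval

theorem exists_lipschitzWith_eqOn_comp {α : Type*} {s : Set α} {F M : α → ℝ} {C : NNReal}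
    (h : ∀ x ∈ s, ∀ y ∈ s, dist (M x) (M y) ≤ C * dist (F x) (F y)) :
    ∃ Φ : ℝ → ℝ, LipschitzWith C Φ ∧ EqOn M (Φ ∘ F) s := by
  rcases s.eq_empty_or_nonempty with rfl | ⟨x₀, -⟩
  · exact ⟨0, LipschitzWith.const' 0 |>.weaken bot_le, eqOn_empty _ _⟩
  have : Nonempty α := ⟨x₀⟩
  have hLip : LipschitzOnWith C (M ∘ Function.invFunOn F s) (F '' s) := by
    refine LipschitzOnWith.of_dist_le_mul fun p hp q hq => ?_
    have := h _ (Function.invFunOn_mem hp) _ (Function.invFunOn_mem hq)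
    rwa [Function.invFunOn_eq hp, Function.invFunOn_eq hq] at this
  obtain ⟨Φ, hΦ, hEq⟩ := hLip.extend_real
  refine ⟨Φ, hΦ, fun x hx => ?_⟩
  have hFx : ∃ y ∈ s, F y = F x := ⟨x, hx, rfl⟩
  have hM := h x hx _ (Function.invFunOn_mem hFx)
  rw [Function.invFunOn_eq hFx, dist_self, mul_zero] at hM
  exact (dist_le_zero.1 hM).trans (hEq (mem_image_of_mem F hx))

section Atomless

variable (ρ : Measure ℝ) [IsFiniteMeasure ρ] [NullSingletonClass ρ]

theorem continuous_measureReal_Iic : Continuous fun t => ρ.real (Iic t) := by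
  have h := intervalIntegral.continuous_primitive (μ := ρ) (f := fun _ => (1 : ℝ))
    (fun _ _ => intervalIntegrable_const) 0
  convert h.add_const (ρ.real (Iic 0)) using 2 with t
  rw [← intervalIntegral.integral_Iic_sub_Iic (integrable_const _).integrableOn
    (integrable_const _).integrableOn]
  simp

theorem measureReal_Icc_eq_sub {a b : ℝ} (h : a ≤ b) :
    ρ.real (Icc a b) = ρ.real (Iic b) - ρ.real (Iic a) := by
  rw [← measureReal_congr Ioc_ae_eq_Icc, ← Iic_sdiff_Iic,
    measureReal_sdiff (Iic_subset_Iic.2 h) measurableSet_Iic]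

-- Expressing the primitive of `x` through the CDF avoids inverting the CDF, which may have flats.
theorem exists_continuous_setIntegral_Icc_eq_sub (c d : ℝ) :
    ∃ Φ : ℝ → ℝ, Continuous Φ ∧ ∀ a b, c ≤ a → a ≤ b → b ≤ d →
      ∫ x in Icc a b, x ∂ρ = Φ (ρ.real (Iic b)) - Φ (ρ.real (Iic a)) := by
  have hint (a b : ℝ) : IntervalIntegrable (fun x => x) ρ a b :=
    continuous_id.intervalIntegrable a b
  have hbound : ∀ a ∈ Icc c d, ∀ b ∈ Icc c d, dist (∫ x in c..a, x ∂ρ) (∫ x in c..b, x ∂ρ) ≤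
      (‖c‖₊ ⊔ ‖d‖₊ : NNReal) * dist (ρ.real (Iic a)) (ρ.real (Iic b)) := by
    intro a ha b hb
    wlog hab : a ≤ b generalizing a b
    · rw [dist_comm, dist_comm (ρ.real _)]
      exact this b hb a ha (le_of_not_ge hab)
    rw [dist_comm, dist_comm (ρ.real _), Real.dist_eq, Real.dist_eq,
      intervalIntegral.integral_interval_sub_left (hint c b) (hint c a),
      ← measureReal_Icc_eq_sub ρ hab, abs_of_nonneg measureReal_nonneg,
      intervalIntegral.integral_of_le hab, setIntegral_congr_set Ioc_ae_eq_Icc]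
    have hC : ∀ x ∈ Icc a b, ‖x‖ ≤ (‖c‖₊ ⊔ ‖d‖₊ : NNReal) := fun x hx => by
      simpa using abs_le_max_abs_abs (ha.1.trans hx.1) (hx.2.trans hb.2)
    exact norm_setIntegral_le_of_norm_le_const (measure_lt_top _ _) hC
  obtain ⟨Φ, hΦ, hEq⟩ := exists_lipschitzWith_eqOn_comp hbound
  refine ⟨Φ, hΦ.continuous, fun a b hca hab hbd => ?_⟩
  rw [← setIntegral_congr_set Ioc_ae_eq_Icc, ← intervalIntegral.integral_of_le hab,
    ← intervalIntegral.integral_interval_sub_left (hint c b) (hint c a)]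
  exact congrArg₂ (· - ·) (hEq ⟨hca.trans hab, hbd⟩) (hEq ⟨hca, hab.trans hbd⟩)

-- A window of constant mass slides from the left end of `[c, d]` to the right end: its first moment
-- is continuous in the quantile `q` of its left edge, and the bathtub principle bounds the target.
theorem exists_Icc_sameMoments_of_le {ν : Measure ℝ} (hle : ν ≤ ρ) {c d : ℝ} (hcd : c ≤ d)
    (hν : ∀ᵐ x ∂ν, x ∈ Icc c d) :
    ∃ a b, c ≤ a ∧ a ≤ b ∧ b ≤ d ∧ SameMoments (ρ.restrict (Icc a b)) ν := by
  have : IsFiniteMeasure ν := isFiniteMeasure_of_le ρ hle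
  obtain ⟨Φ, hΦ, hmoment⟩ := exists_continuous_setIntegral_Icc_eq_sub ρ c d
  set F : ℝ → ℝ := fun t => ρ.real (Iic t)
  have hFcont : Continuous F := continuous_measureReal_Iic ρ
  set p := ν.real univ
  have hp : F c + p ≤ F d := by
    have hpIcc : ν.real (Icc c d) = p := measureReal_congr (ae_eq_univ.2 hν)
    have : ν.real (Icc c d) ≤ ρ.real (Icc c d) := ENNReal.toReal_mono (measure_ne_top _ _) (hle _)
    linarith [measureReal_Icc_eq_sub ρ hcd]
  have hp0 : 0 ≤ p := measureReal_nonneg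
  have hlow : Φ (F c + p) - Φ (F c) ≤ ∫ x, x ∂ν := by
    obtain ⟨b, hb, hFb⟩ := intermediate_value_Icc hcd hFcont.continuousOn
      ⟨le_add_of_nonneg_right hp0, hp⟩
    rw [← hFb, ← hmoment c b le_rfl hb.1 hb.2]
    exact setIntegral_Icc_le_integral hle hν (by linarith [measureReal_Icc_eq_sub ρ hb.1])
  have hhigh : ∫ x, x ∂ν ≤ Φ (F d) - Φ (F d - p) := by
    obtain ⟨a, ha, hFa⟩ := intermediate_value_Icc hcd hFcont.continuousOn
      ⟨le_sub_iff_add_le.2 hp, sub_le_self _ hp0⟩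
    rw [← hFa, ← hmoment a d ha.1 ha.2 le_rfl]
    exact integral_le_setIntegral_Icc hle hν (by linarith [measureReal_Icc_eq_sub ρ ha.2])
  obtain ⟨q, hq, hgq⟩ := intermediate_value_Icc (f := fun q => Φ (q + p) - Φ q)
    (le_sub_iff_add_le.2 hp) (by fun_prop) ⟨hlow, by rwa [sub_add_cancel]⟩
  obtain ⟨a, ha, hFa⟩ := intermediate_value_Icc hcd hFcont.continuousOn
    ⟨hq.1, hq.2.trans (sub_le_self _ hp0)⟩
  obtain ⟨b, hb, hFb⟩ := intermediate_value_Icc ha.2 hFcont.continuousOn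
    ⟨hFa.le.trans (le_add_of_nonneg_right hp0), le_sub_iff_add_le.1 hq.2⟩
  refine ⟨a, b, ha.1, hb.1, hb.2, ?_, ?_⟩
  · rw [measureReal_restrict_apply_univ, measureReal_Icc_eq_sub ρ hb.1]
    linarith
  · rw [hmoment a b ha.1 hb.1 hb.2, ← hgq]
    exact congrArg₂ (fun s t => Φ s - Φ t) hFb hFa

end Atomless

section Separated

variable {α : Type*} [MeasurableSpace α] {κ : Measure α} [IsFiniteMeasure κ] {f : α → ℝ} {c : ℝ}

theorem integral_le_mul_measureReal (hf : Integrable f κ) (h : ∀ᵐ x ∂κ, f x ≤ c) :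
    ∫ x, f x ∂κ ≤ c * κ.real univ :=
  (integral_mono_ae hf (integrable_const c) h).trans_eq (by simp [mul_comm])

theorem mul_measureReal_le_integral (hf : Integrable f κ) (h : ∀ᵐ x ∂κ, c ≤ f x) :
    c * κ.real univ ≤ ∫ x, f x ∂κ :=
  (integral_mono_ae (integrable_const c) hf h).trans_eq' (by simp [mul_comm])

theorem integral_lt_mul_measureReal (hκ : κ ≠ 0) (hf : Integrable f κ) (h : ∀ᵐ x ∂κ, f x < c) :
    ∫ x, f x ∂κ < c * κ.real univ := by
  obtain ⟨x, hx, hle⟩ := exists_notMem_null_average_le hκ hf h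
  have : NeZero κ := ⟨hκ⟩
  have hmass : 0 < κ.real univ := measureReal_univ_pos
  rw [average_eq, smul_eq_mul, inv_mul_le_iff₀' hmass] at hle
  exact hle.trans_lt (mul_lt_mul_of_pos_right (not_not.1 hx) hmass)

theorem mul_measureReal_lt_integral (hκ : κ ≠ 0) (hf : Integrable f κ) (h : ∀ᵐ x ∂κ, c < f x) :
    c * κ.real univ < ∫ x, f x ∂κ := by
  have := integral_lt_mul_measureReal hκ hf.neg (h.mono fun x hx => neg_lt_neg hx)
  simp only [Pi.neg_apply, integral_neg] at this
  linarith

end Separated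

-- The weights solve the two equations for each `j` by Cramer's rule.
open scoped NNReal in
theorem exists_nnreal_weights {ι : Type*} {J : Finset ι} {m x : ι → ℝ} {a b ML XL MR XR : ℝ}
    (hdet : 0 < ML * XR - MR * XL) (hML : 0 ≤ ML) (hMR : 0 ≤ MR)
    (hXL : XL ≤ a * ML) (hXR : b * MR ≤ XR) (hm : ∀ j ∈ J, 0 ≤ m j)
    (hax : ∀ j ∈ J, a * m j ≤ x j) (hxb : ∀ j ∈ J, x j ≤ b * m j)
    (hmsum : ∑ j ∈ J, m j = ML + MR) (hxsum : ∑ j ∈ J, x j = XL + XR) :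
    ∃ α β : ι → ℝ≥0, (∀ j ∈ J, α j * ML + β j * MR = m j ∧ α j * XL + β j * XR = x j) ∧
      ∑ j ∈ J, α j = 1 ∧ ∑ j ∈ J, β j = 1 := by
  set Δ := ML * XR - MR * XL with hΔ
  have hα : ∀ j ∈ J, ((((m j * XR - x j * MR) / Δ).toNNReal : ℝ≥0) : ℝ) =
      (m j * XR - x j * MR) / Δ := fun j hj =>
    Real.coe_toNNReal _ <| div_nonneg (by
      nlinarith [mul_le_mul_of_nonneg_left hXR (hm j hj),
        mul_le_mul_of_nonneg_right (hxb j hj) hMR]) hdet.le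
  have hβ : ∀ j ∈ J, ((((ML * x j - XL * m j) / Δ).toNNReal : ℝ≥0) : ℝ) =
      (ML * x j - XL * m j) / Δ := fun j hj =>
    Real.coe_toNNReal _ <| div_nonneg (by
      nlinarith [mul_le_mul_of_nonneg_right hXL (hm j hj),
        mul_le_mul_of_nonneg_left (hax j hj) hML]) hdet.le
  refine ⟨fun j => ((m j * XR - x j * MR) / Δ).toNNReal,
    fun j => ((ML * x j - XL * m j) / Δ).toNNReal, fun j hj => ?_, ?_, ?_⟩
  · rw [hα j hj, hβ j hj]
    constructor <;> field_simp <;> ring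
  · rw [← NNReal.coe_inj, NNReal.coe_sum, Finset.sum_congr rfl hα, ← Finset.sum_div,
      Finset.sum_sub_distrib, ← Finset.sum_mul, ← Finset.sum_mul, hmsum, hxsum, NNReal.coe_one,
      div_eq_one_iff_eq hdet.ne', hΔ]
    ring
  · rw [← NNReal.coe_inj, NNReal.coe_sum, Finset.sum_congr rfl hβ, ← Finset.sum_div,
      Finset.sum_sub_distrib, ← Finset.mul_sum, ← Finset.mul_sum, hmsum, hxsum, NNReal.coe_one,
      div_eq_one_iff_eq hdet.ne', hΔ]
    ring

section FinsetSum

variable {α ι : Type*} [MeasurableSpace α] {J : Finset ι} {κ : ι → Measure α}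

theorem le_finsetSum_measure {j : ι} (hj : j ∈ J) : κ j ≤ ∑ i ∈ J, κ i :=
  Measure.le_intro fun s _ _ => by
    rw [Measure.finsetSum_apply]
    exact Finset.single_le_sum (f := fun i => κ i s) (fun _ _ => zero_le) hj

theorem measureReal_finsetSum_apply (h : ∀ j ∈ J, IsFiniteMeasure (κ j)) (s : Set α) :
    (∑ j ∈ J, κ j).real s = ∑ j ∈ J, (κ j).real s := by
  simp only [measureReal_def, Measure.finsetSum_apply]
  exact ENNReal.toReal_sum fun j hj => have := h j hj; measure_ne_top _ _

end FinsetSum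

section Rebalance

variable {νL νR : Measure ℝ} [IsFiniteMeasure νL] [IsFiniteMeasure νR] {a b : ℝ}

theorem mass_mul_moment_sub_pos {κ : Measure ℝ} [IsFiniteMeasure κ] (hab : a ≤ b)
    (hL : ∀ᵐ x ∂νL, x < a) (hR : ∀ᵐ x ∂νR, b < x) (hκ : ∀ᵐ x ∂κ, x ∈ Icc a b)
    (hLint : Integrable (fun x => x) νL) (hRint : Integrable (fun x => x) νR)
    (h : SameMoments κ (νL + νR)) (hLR : νL + νR ≠ 0) :
    0 < νL.real univ * (∫ x, x ∂νR) - νR.real univ * ∫ x, x ∂νL := by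
  have hκint : Integrable (fun x => x) κ := Integrable.of_mem_Icc a b aemeasurable_id hκ
  have hmass : κ.real univ = νL.real univ + νR.real univ := by
    rw [h.mass, measureReal_add_apply]
  have hmoment : ∫ x, x ∂κ = (∫ x, x ∂νL) + ∫ x, x ∂νR := by
    rw [h.moment, integral_add_measure hLint hRint]
  have hκa := mul_measureReal_le_integral hκint (hκ.mono fun _ hx => hx.1)
  have hκb := integral_le_mul_measureReal hκint (hκ.mono fun _ hx => hx.2)
  rw [hmass, hmoment] at hκa hκb
  have hL0 : νL ≠ 0 := by
    rintro rfl
    have := mul_measureReal_lt_integral (by simpa using hLR) hRint hR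
    simp at hκb
    linarith
  have hR0 : νR ≠ 0 := by
    rintro rfl
    have := integral_lt_mul_measureReal (by simpa using hLR) hLint hL
    simp at hκa
    linarith
  have hXL := integral_lt_mul_measureReal hL0 hLint hL
  have hXR := mul_measureReal_lt_integral hR0 hRint hR
  have : NeZero νL := ⟨hL0⟩
  have : NeZero νR := ⟨hR0⟩
  have hML : 0 < νL.real univ := measureReal_univ_pos
  have hMR : 0 < νR.real univ := measureReal_univ_pos
  rw [sub_pos]
  calc νR.real univ * ∫ x, x ∂νL < νR.real univ * (a * νL.real univ) := by gcongr
    _ ≤ νL.real univ * (b * νR.real univ) := by nlinarith [mul_pos hML hMR]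
    _ < νL.real univ * ∫ x, x ∂νR := by gcongr

theorem exists_sum_eq_add_sameMoments {ι : Type*} {J : Finset ι} {κ : ι → Measure ℝ}
    [IsFiniteMeasure (∑ j ∈ J, κ j)] (hab : a ≤ b)
    (hL : ∀ᵐ x ∂νL, x < a) (hR : ∀ᵐ x ∂νR, b < x) (hκ : ∀ j ∈ J, ∀ᵐ x ∂κ j, x ∈ Icc a b)
    (hLint : Integrable (fun x => x) νL) (hRint : Integrable (fun x => x) νR)
    (h : SameMoments (∑ j ∈ J, κ j) (νL + νR)) :
    ∃ K : ι → Measure ℝ, ∑ j ∈ J, K j = νL + νR ∧ ∀ j ∈ J, SameMoments (K j) (κ j) := by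
  rcases eq_or_ne (νL + νR) 0 with h0 | h0
  · refine ⟨κ, ?_, fun j _ => ⟨rfl, rfl⟩⟩
    have := h.mass
    rwa [h0, measureReal_zero, Pi.zero_apply, measureReal_eq_zero_iff, Measure.measure_univ_eq_zero,
      ← h0] at this
  have hfin : ∀ j ∈ J, IsFiniteMeasure (κ j) := fun j hj =>
    isFiniteMeasure_of_le _ (le_finsetSum_measure hj)
  have hint : ∀ j ∈ J, Integrable (fun x => x) (κ j) := fun j hj =>
    have := hfin j hj
    Integrable.of_mem_Icc a b aemeasurable_id (hκ j hj)
  obtain ⟨α, β, hαβ, hα, hβ⟩ := exists_nnreal_weights (m := fun j => (κ j).real univ)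
    (x := fun j => ∫ x, x ∂κ j)
    (mass_mul_moment_sub_pos hab hL hR (ae_finsetSum_measure_iff.2 hκ) hLint hRint h h0)
    measureReal_nonneg measureReal_nonneg
    (integral_le_mul_measureReal hLint (hL.mono fun _ => le_of_lt))
    (mul_measureReal_le_integral hRint (hR.mono fun _ => le_of_lt))
    (fun _ _ => measureReal_nonneg)
    (fun j hj => have := hfin j hj
      mul_measureReal_le_integral (hint j hj) ((hκ j hj).mono fun _ hx => hx.1))
    (fun j hj => have := hfin j hj
      integral_le_mul_measureReal (hint j hj) ((hκ j hj).mono fun _ hx => hx.2))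
    (by rw [← measureReal_finsetSum_apply hfin, h.mass, measureReal_add_apply])
    (by rw [← integral_finsetSum_measure hint, h.moment, integral_add_measure hLint hRint])
  refine ⟨fun j => α j • νL + β j • νR, ?_, fun j hj => ⟨?_, ?_⟩⟩
  · rw [Finset.sum_add_distrib, ← Finset.sum_smul, ← Finset.sum_smul, hα, hβ, one_smul, one_smul]
  · rw [measureReal_add_apply, measureReal_nnreal_smul_apply, measureReal_nnreal_smul_apply]
    exact (hαβ j hj).1
  · rw [integral_add_measure hLint.smul_measure_nnreal hRint.smul_measure_nnreal,
      integral_smul_nnreal_measure, integral_smul_nnreal_measure]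
    exact (hαβ j hj).2

end Rebalance

theorem restrict_finsetSum {α ι : Type*} [MeasurableSpace α] (J : Finset ι) (N : ι → Measure α)
    (s : Set α) : (∑ j ∈ J, N j).restrict s = ∑ j ∈ J, (N j).restrict s :=
  map_sum (Measure.restrictₗ s) N J

theorem exists_exchange {ι : Type*} {J : Finset ι} {ρ ν : Measure ℝ} {N : ι → Measure ℝ}
    [IsFiniteMeasure ρ] [NullSingletonClass ρ] (hint : Integrable (fun x => x) ρ)
    (hρ : ρ = ν + ∑ j ∈ J, N j) {c d : ℝ} (hcd : c ≤ d) (hν : ∀ᵐ x ∂ν, x ∈ Icc c d) :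
    ∃ a b, c ≤ a ∧ a ≤ b ∧ b ≤ d ∧ SameMoments (ρ.restrict (Icc a b)) ν ∧
      ∃ N' : ι → Measure ℝ, ∑ j ∈ J, N' j = ρ.restrict (Icc a b)ᶜ ∧
        ∀ j ∈ J, SameMoments (N' j) (N j) ∧ N' j ≤ N j + ν := by
  have hνρ : ν ≤ ρ := hρ ▸ Measure.le_add_right le_rfl
  have hNρ : ∑ j ∈ J, N j ≤ ρ := hρ ▸ Measure.le_add_left le_rfl
  have : IsFiniteMeasure ν := isFiniteMeasure_of_le ρ hνρ
  have : IsFiniteMeasure (∑ j ∈ J, N j) := isFiniteMeasure_of_le ρ hNρ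
  have hνint := hint.mono_measure hνρ
  have hNint := hint.mono_measure hNρ
  obtain ⟨a, b, hca, hab, hbd, hsame⟩ := exists_Icc_sameMoments_of_le ρ hνρ hcd hν
  have hcompl : ν.restrict (Icc a b)ᶜ = ν.restrict (Iio a) + ν.restrict (Ioi b) := by
    rw [← Measure.restrict_union ((Iio_disjoint_Ici hab).mono_right Ioi_subset_Ici_self)
      measurableSet_Ioi, ← compl_Ici, ← compl_Iic, ← compl_inter, Ici_inter_Iic]
  have hdisplaced : SameMoments (∑ j ∈ J, (N j).restrict (Icc a b))
      (ν.restrict (Iio a) + ν.restrict (Ioi b)) := by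
    rwa [← hcompl, ← restrict_finsetSum, ← sameMoments_add_left_iff (κ := ν.restrict (Icc a b))
      hνint.restrict hNint.restrict hνint.restrict,
      Measure.restrict_add_restrict_compl measurableSet_Icc, ← Measure.restrict_add, ← hρ]
  have hleft : ∀ᵐ x ∂ν.restrict (Iio a), x < a := ae_restrict_mem measurableSet_Iio
  have hright : ∀ᵐ x ∂ν.restrict (Ioi b), b < x := ae_restrict_mem measurableSet_Ioi
  have : IsFiniteMeasure (∑ j ∈ J, (N j).restrict (Icc a b)) := by
    rw [← restrict_finsetSum]; infer_instance
  obtain ⟨K, hKsum, hK⟩ := exists_sum_eq_add_sameMoments hab hleft hright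
    (fun j _ => ae_restrict_mem measurableSet_Icc) hνint.restrict hνint.restrict hdisplaced
  have hKν : ∀ j ∈ J, K j ≤ ν := fun j hj =>
    (le_finsetSum_measure hj).trans (hKsum.trans_le (hcompl ▸ Measure.restrict_le_self))
  refine ⟨a, b, hca, hab, hbd, hsame, fun j => (N j).restrict (Icc a b)ᶜ + K j, ?_,
    fun j hj => ⟨?_, add_le_add Measure.restrict_le_self (hKν j hj)⟩⟩
  · rw [Finset.sum_add_distrib, ← restrict_finsetSum, hKsum, ← hcompl, hρ, Measure.restrict_add,
      add_comm]
  · have hNint := hNint.mono_measure (le_finsetSum_measure hj)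
    have := isFiniteMeasure_of_le _ (le_finsetSum_measure (κ := N) hj)
    have := isFiniteMeasure_of_le _ (hKν j hj)
    have h := (sameMoments_add_left_iff (κ := (N j).restrict (Icc a b)ᶜ) hNint.restrict
      (hνint.mono_measure (hKν j hj)) hNint.restrict).2 (hK j hj)
    rwa [add_comm _ ((N j).restrict (Icc a b)),
      Measure.restrict_add_restrict_compl measurableSet_Icc] at h

theorem disjointed_succ_eq_sdiff {α : Type*} (f : ℕ → Set α) (j : ℕ) :
    disjointed f (j + 1) = disjointed (fun k => f (k + 1)) j \ f 0 := by
  ext x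
  simp only [disjointed_eq_inter_compl, mem_inter_iff, mem_iInter, mem_compl_iff,
    Nat.forall_lt_succ_left, mem_sdiff]
  tauto

theorem exists_disjointed_Icc_sameMoments {n : ℕ} {ρ : Measure ℝ} [IsFiniteMeasure ρ]
    [NullSingletonClass ρ] (hint : Integrable (fun x => x) ρ) {N : ℕ → Measure ℝ}
    (hρ : ∑ j ∈ Finset.range n, N j = ρ) {c : ℝ} {d : ℕ → ℝ} (hcd : ∀ j < n, c ≤ d j)
    (hd : MonotoneOn d (Iio n)) (hN : ∀ j < n, ∀ᵐ x ∂N j, x ∈ Icc c (d j)) :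
    ∃ a b : ℕ → ℝ, (∀ j < n, c ≤ a j ∧ a j ≤ b j ∧ b j ≤ d j) ∧
      (∀ j < n, SameMoments (ρ.restrict (disjointed (fun k => Icc (a k) (b k)) j)) (N j)) ∧
      ρ (⋃ j < n, Icc (a j) (b j))ᶜ = 0 := by
  induction n generalizing ρ N d with
  | zero => exact ⟨0, 0, by simp, by simp, by simp [← hρ]⟩
  | succ n ih =>
    have hsplit : ρ = N 0 + ∑ j ∈ Finset.range n, N (j + 1) := by
      rw [← hρ, Finset.sum_range_succ', add_comm]
    obtain ⟨a₀, b₀, hca₀, hab₀, hbd₀, hsame₀, N', hN'sum, hN'⟩ :=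
      exists_exchange hint hsplit (hcd 0 n.succ_pos) (hN 0 n.succ_pos)
    have hN'supp : ∀ j < n, ∀ᵐ x ∂N' j, x ∈ Icc c (d (j + 1)) := by
      intro j hj
      have hd0 : d 0 ≤ d (j + 1) := hd n.succ_pos (Nat.succ_lt_succ hj) (Nat.zero_le _)
      exact ae_mono (hN' j (Finset.mem_range.2 hj)).2 <| ae_add_measure_iff.2
        ⟨hN _ (Nat.succ_lt_succ hj), (hN 0 n.succ_pos).mono fun x hx => ⟨hx.1, hx.2.trans hd0⟩⟩
    obtain ⟨a, b, hab, hsame, hcover⟩ := ih hint.restrict hN'sum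
      (fun j hj => hcd _ (Nat.succ_lt_succ hj))
      (fun i hi j hj hij => hd (Nat.succ_lt_succ hi) (Nat.succ_lt_succ hj) (Nat.succ_le_succ hij))
      hN'supp
    refine ⟨fun | 0 => a₀ | j + 1 => a j, fun | 0 => b₀ | j + 1 => b j, ?_, ?_, ?_⟩
    · rintro (_ | j) hj
      exacts [⟨hca₀, hab₀, hbd₀⟩, hab j (Nat.lt_of_succ_lt_succ hj)]
    · rintro (_ | j) hj
      · simpa only [disjointed_zero] using hsame₀
      · have hj := Nat.lt_of_succ_lt_succ hj
        rw [disjointed_succ_eq_sdiff, sdiff_eq,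
          ← Measure.restrict_restrict (.disjointed (fun _ => measurableSet_Icc) j)]
        exact (hsame j hj).trans (hN' j (Finset.mem_range.2 hj)).1
    · rw [biUnion_lt_succ', compl_union, inter_comm, ← Measure.restrict_apply]
      · exact hcover
      · exact (MeasurableSet.biUnion (to_countable _) fun _ _ => measurableSet_Icc).compl

theorem disjointed_eq_sdiff_biUnion_range {α : Type*} (f : ℕ → Set α) (i : ℕ) :
    disjointed f i = f i \ ⋃ j ∈ Finset.range i, f j := by
  simp [disjointed_apply, Finset.sup_set_eq_biUnion]

theorem biUnion_range_disjointed {α : Type*} (f : ℕ → Set α) (n : ℕ) :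
    ⋃ i ∈ Finset.range n, disjointed f i = ⋃ i ∈ Finset.range n, f i := by
  cases n with
  | zero => simp
  | succ n => rw [biUnion_range_succ_disjointed, partialSups_eq_biUnion_range]

/-- The laminar family generated by a sequence of sets: each set gives up the points of its
predecessors, and is then closed up again. -/
def laminarFamily {X : Type*} [TopologicalSpace X] (I : ℕ → Set X) (i : ℕ) : Set X :=
  closure (disjointed I i)

section LaminarFamily

variable {X : Type*} [TopologicalSpace X] {I : ℕ → Set X}

theorem laminarFamily_subset {i : ℕ} (hI : IsClosed (I i)) : laminarFamily I i ⊆ I i :=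
  closure_minimal (disjointed_subset I i) hI

theorem laminarFamily_inter_subset_frontier {k i : ℕ} (hki : k < i) :
    laminarFamily I i ∩ I k ⊆ frontier (I k) := by
  rw [frontier_eq_closure_inter_closure, inter_comm]
  refine inter_subset_inter subset_closure (closure_mono ?_)
  rw [disjointed_eq_sdiff_biUnion_range]
  exact fun x hx hxk => hx.2 (mem_biUnion (Finset.mem_range.2 hki) hxk)

variable [MeasurableSpace X] {μ : Measure X}

theorem laminarFamily_ae_eq_disjointed (hI : ∀ i, IsClosed (I i))
    (hfr : ∀ i, μ (frontier (I i)) = 0) (i : ℕ) : laminarFamily I i =ᵐ[μ] disjointed I i := by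
  refine (subset_closure.eventuallyLE.antisymm ?_).symm
  have hnull : μ (⋃ k, frontier (I k)) = 0 := measure_iUnion_null hfr
  refine ae_le_set.2 (measure_mono_null ?_ hnull)
  rintro x ⟨hx, hxd⟩
  rw [disjointed_eq_sdiff_biUnion_range] at hxd
  have hxU := not_not.1 fun h => hxd ⟨laminarFamily_subset (hI i) hx, h⟩
  obtain ⟨k, hki, hxk⟩ := mem_iUnion₂.1 hxU
  exact mem_iUnion.2 ⟨k, laminarFamily_inter_subset_frontier (Finset.mem_range.1 hki) ⟨hx, hxk⟩⟩

theorem measure_laminarFamily_inter (hI : ∀ i, IsClosed (I i))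
    (hfr : ∀ i, μ (frontier (I i)) = 0) {i j : ℕ} (hij : i ≠ j) :
    μ (laminarFamily I i ∩ laminarFamily I j) = 0 := by
  wlog h : j < i generalizing i j
  · rw [inter_comm]
    exact this hij.symm (hij.lt_or_gt.resolve_right h)
  exact measure_mono_null ((inter_subset_inter_right _ (laminarFamily_subset (hI j))).trans
    (laminarFamily_inter_subset_frontier h)) (hfr j)

theorem support_subset_biUnion_laminarFamily {n : ℕ}
    (hcover : μ (⋃ i ∈ Finset.range n, I i)ᶜ = 0) :
    μ.support ⊆ ⋃ i ∈ Finset.range n, laminarFamily I i := by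
  refine Measure.support_subset_of_isClosed
    (isClosed_biUnion_finset fun _ _ => isClosed_closure) (mem_ae_iff.2 ?_)
  rw [← biUnion_range_disjointed] at hcover
  exact measure_mono_null (compl_subset_compl.2 (biUnion_mono subset_rfl fun _ _ => subset_closure))
    hcover

end LaminarFamily

theorem isLaminar_laminarFamily {I : ℕ → Set ℝ} (hI : ∀ i, IsClosed (I i))
    (hconv : ∀ i, Convex ℝ (I i)) (n : ℕ) : IsLaminar n (laminarFamily I) := by
  have hsub (i : ℕ) : disjointed I i ⊆ convexHull ℝ (laminarFamily I i) :=
    subset_closure.trans (subset_convexHull ℝ _)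
  have hhull (i : ℕ) : convexHull ℝ (laminarFamily I i) ⊆ I i :=
    convexHull_min (laminarFamily_subset (hI i)) (hconv i)
  intro i _
  have hunion : ⋃ j ∈ Finset.range i, convexHull ℝ (laminarFamily I j) =
      ⋃ j ∈ Finset.range i, I j :=
    (biUnion_mono subset_rfl fun j _ => hhull j).antisymm <|
      (biUnion_range_disjointed I i).ge.trans (biUnion_mono subset_rfl fun j _ => hsub j)
  rw [hunion]
  refine congrArg closure (Subset.antisymm ?_ ?_)
  · exact subset_sdiff.2 ⟨hsub i, disjointed_eq_sdiff_biUnion_range I i ▸ disjoint_sdiff_left⟩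
  · rw [disjointed_eq_sdiff_biUnion_range]
    exact sdiff_subset_sdiff_left (hhull i)

theorem measure_frontier_Icc (μ : Measure ℝ) [NullSingletonClass μ] (a b : ℝ) :
    μ (frontier (Icc a b)) = 0 := by
  rcases le_or_gt a b with h | h
  · rw [frontier_Icc h]
    exact (toFinite {a, b}).measure_zero μ
  · simp [Icc_eq_empty h.not_ge]

theorem restrict_biUnion_finset_of_aedisjoint {α ι : Type*} [MeasurableSpace α] {μ : Measure α}
    {J : Finset ι} {s : ι → Set α} (hs : ∀ i ∈ J, NullMeasurableSet (s i) μ)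
    (hd : (J : Set ι).Pairwise (Function.onFun (AEDisjoint μ) s)) :
    μ.restrict (⋃ i ∈ J, s i) = ∑ i ∈ J, μ.restrict (s i) := by
  rw [← Finset.sum_coe_sort, ← Measure.sum_fintype, ← Finset.set_biUnion_coe, biUnion_eq_iUnion]
  exact Measure.restrict_iUnion_ae (fun i j hij => hd i.2 j.2 (Subtype.coe_injective.ne hij))
    fun i => hs i i.2

theorem sum_restrict_Ioc_succ {μ : Measure ℝ} {n : ℕ} {γ : ℕ → ℝ} (hγ : MonotoneOn γ (Iic n)) :
    ∑ j ∈ Finset.range n, μ.restrict (Ioc (γ j) (γ (j + 1))) = μ.restrict (Ioc (γ 0) (γ n)) := by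
  induction n with
  | zero => simp
  | succ n ih =>
    rw [Finset.sum_range_succ, ih (hγ.mono (Iic_subset_Iic.2 n.le_succ)),
      ← Measure.restrict_union (Ioc_disjoint_Ioc_of_le le_rfl) measurableSet_Ioc,
      Ioc_union_Ioc_eq_Ioc (hγ (Nat.zero_le _) n.le_succ (Nat.zero_le _))
        (hγ n.le_succ (mem_Iic.2 le_rfl) n.le_succ)]

theorem exists_mem_Ioc_succ {X : Type*} [LinearOrder X] {γ : ℕ → X} {m n : ℕ} (hmn : m ≤ n) {x : X}
    (hx : x ∈ Ioc (γ m) (γ n)) : ∃ i, m ≤ i ∧ i < n ∧ x ∈ Ioc (γ i) (γ (i + 1)) := by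
  have := Ioc_subset_biUnion_Ioc (n - m) (fun i => γ (m + i))
  simp only [add_zero, Nat.add_sub_cancel' hmn] at this
  obtain ⟨i, hi, hxi⟩ := mem_iUnion₂.1 (this hx)
  exact ⟨m + i, Nat.le_add_right _ _, Nat.add_lt_of_lt_sub' (Finset.mem_range.1 hi), hxi⟩

/-- A division of `μ` among the `n` actions that meets the Sender's constraints: the states
assigned to action `j` do not exceed `γ (j + 1)` (incentive compatibility) and have mean at least
`γ j` (obedience, the upper bound on the mean being automatic). The lower bound is multiplied by
the mass so that it is trivial for actions of mass zero. -/
structure IsFeasibleSplit (μ : Measure ℝ) (n : ℕ) (γ : ℕ → ℝ) (N : ℕ → Measure ℝ) : Prop where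
  sum_eq : ∑ j ∈ Finset.range n, N j = μ
  ae_mem : ∀ j < n, ∀ᵐ x ∂N j, x ∈ Icc 0 (γ (j + 1))
  le_moment : ∀ j < n, γ j * (N j).real univ ≤ ∫ x, x ∂N j

theorem IsFeasibleSplit.le {μ : Measure ℝ} {n : ℕ} {γ : ℕ → ℝ} {N : ℕ → Measure ℝ}
    (h : IsFeasibleSplit μ n γ N) {j : ℕ} (hj : j < n) : N j ≤ μ :=
  (le_finsetSum_measure (Finset.mem_range.2 hj)).trans_eq h.sum_eq

theorem IsFeasibleSplit.integrable {μ : Measure ℝ} [IsFiniteMeasure μ] {n : ℕ} {γ : ℕ → ℝ}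
    {N : ℕ → Measure ℝ} (h : IsFeasibleSplit μ n γ N) {j : ℕ} (hj : j < n) :
    Integrable (fun x => x) (N j) :=
  have := isFiniteMeasure_of_le μ (h.le hj)
  Integrable.of_mem_Icc _ _ aemeasurable_id (h.ae_mem j hj)

section Representations

variable {μ : Measure ℝ} {n : ℕ} {γ : ℕ → ℝ} {B : ℕ → Set ℝ}

theorem IsDetRep.sum_restrict (hB : IsDetRep μ n B) :
    ∑ j ∈ Finset.range n, μ.restrict (B j) = μ.restrict (Icc 0 1) := by
  rw [← hB.2.1, restrict_biUnion_finset_of_aedisjoint]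
  · exact fun j hj => (hB.1 j (Finset.mem_range.1 hj)).1.measurableSet.nullMeasurableSet
  · exact fun i hi j hj hij => hB.2.2 i (Finset.mem_range.1 hi) j (Finset.mem_range.1 hj) hij

theorem IsIC.mem_biUnion_of_lt (hIC : IsIC n γ B) {j : ℕ} (hj : j < n) {x : ℝ}
    (hx : x ∈ Ioc (γ (j + 1)) (γ n)) : ∃ k, j < k ∧ k < n ∧ x ∈ B k := by
  obtain ⟨i, hji, hin, hxi⟩ := exists_mem_Ioc_succ hj hx
  obtain ⟨k, hk, hxk⟩ := mem_iUnion₂.1 (hIC i hin (Ioc_subset_Icc_self hxi))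
  rw [Finset.mem_Ico] at hk
  exact ⟨k, hji.trans hk.1, hk.2, hxk⟩

theorem IsDetRep.ae_restrict_mem_Icc_of_isIC (hB : IsDetRep μ n B) (hIC : IsIC n γ B)
    (hγn : γ n = 1) {j : ℕ} (hj : j < n) : ∀ᵐ x ∂μ.restrict (B j), x ∈ Icc 0 (γ (j + 1)) := by
  refine (ae_restrict_iff' (hB.1 j hj).1.measurableSet).2 ?_
  have hnull : μ (⋃ k ∈ Finset.Ioo j n, B j ∩ B k) = 0 :=
    (measure_biUnion_null_iff (Finset.countable_toSet _)).2 fun k hk =>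
      have hk := Finset.mem_Ioo.1 hk
      hB.2.2 j hj k hk.2 hk.1.ne
  filter_upwards [measure_eq_zero_iff_ae_notMem.1 hnull] with x hx hxj
  have hx01 := (hB.1 j hj).2 hxj
  refine ⟨hx01.1, not_lt.1 fun hlt => ?_⟩
  obtain ⟨k, hjk, hkn, hxk⟩ := hIC.mem_biUnion_of_lt hj ⟨hlt, hx01.2.trans_eq hγn.symm⟩
  exact hx (mem_biUnion (Finset.mem_Ioo.2 ⟨hjk, hkn⟩) ⟨hxj, hxk⟩)

theorem le_condMean_iff_s19 [IsFiniteMeasure μ] {s : Set ℝ} (hs : μ s ≠ 0) {c : ℝ} :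
    c ≤ condMean μ s ↔ c * μ.real s ≤ ∫ x in s, x ∂μ :=
  le_div_iff₀ (ENNReal.toReal_pos hs (measure_ne_top _ _))

theorem condMean_le_iff [IsFiniteMeasure μ] {s : Set ℝ} (hs : μ s ≠ 0) {c : ℝ} :
    condMean μ s ≤ c ↔ ∫ x in s, x ∂μ ≤ c * μ.real s :=
  div_le_iff₀ (ENNReal.toReal_pos hs (measure_ne_top _ _))

theorem IsDetRep.isFeasibleSplit [IsFiniteMeasure μ] (hμ : ∀ᵐ x ∂μ, x ∈ Icc 0 1)
    (hγn : γ n = 1) (hB : IsDetRep μ n B) (hob : IsObedient μ n γ B) (hIC : IsIC n γ B) :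
    IsFeasibleSplit μ n γ fun j => μ.restrict (B j) where
  sum_eq := hB.sum_restrict.trans (Measure.restrict_eq_self_of_ae_mem hμ)
  ae_mem _ hj := hB.ae_restrict_mem_Icc_of_isIC hIC hγn hj
  le_moment j hj := by
    rw [measureReal_restrict_apply_univ]
    by_cases h0 : μ (B j) = 0
    · simp [measureReal_def, h0, Measure.restrict_eq_zero.2 h0]
    · exact (le_condMean_iff_s19 h0).1 (hob j hj h0).1

theorem isFeasibleSplit_unraveling [IsFiniteMeasure μ] [NullSingletonClass μ]
    (hμ : ∀ᵐ x ∂μ, x ∈ Icc 0 1) (hγ0 : γ 0 = 0) (hγn : γ n = 1) (hγ : StrictMonoOn γ (Iic n)) :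
    IsFeasibleSplit μ n γ fun j => μ.restrict (Icc (γ j) (γ (j + 1))) where
  sum_eq := by
    simp_rw [← restrict_Ioc_eq_restrict_Icc]
    rw [sum_restrict_Ioc_succ hγ.monotoneOn, hγ0, hγn, restrict_Ioc_eq_restrict_Icc,
      Measure.restrict_eq_self_of_ae_mem hμ]
  ae_mem j hj := (ae_restrict_mem measurableSet_Icc).mono fun x hx =>
    ⟨(hγ0.symm.trans_le (hγ.monotoneOn (Nat.zero_le _) hj.le (Nat.zero_le _))).trans hx.1, hx.2⟩
  le_moment _ _ := mul_measureReal_le_integral continuous_id.integrableOn_Icc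
    ((ae_restrict_mem measurableSet_Icc).mono fun _ hx => hx.1)

theorem isIC_of_subset_Iic (hγ0 : γ 0 = 0) (hγn : γ n = 1) (hγ : StrictMonoOn γ (Iic n))
    (hB : IsDetRep μ n B) (hBγ : ∀ j < n, B j ⊆ Iic (γ (j + 1))) : IsIC n γ B := by
  intro i hi
  rw [← closure_Ioc (hγ hi.le (Nat.succ_le_of_lt hi) i.lt_succ_self).ne]
  refine closure_minimal (fun x hx => ?_) (isClosed_biUnion_finset fun j hj =>
    (hB.1 j (Finset.mem_Ico.1 hj).2).1)
  have hx01 : x ∈ Icc 0 1 := by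
    rw [← hγ0, ← hγn]
    exact ⟨(hγ.monotoneOn (Nat.zero_le _) hi.le (Nat.zero_le _)).trans hx.1.le,
      hx.2.trans (hγ.monotoneOn (Nat.succ_le_of_lt hi) (mem_Iic.2 le_rfl) (Nat.succ_le_of_lt hi))⟩
  rw [← hB.2.1] at hx01
  obtain ⟨j, hj, hxj⟩ := mem_iUnion₂.1 hx01
  rw [Finset.mem_range] at hj
  refine mem_biUnion (Finset.mem_Ico.2 ⟨Nat.lt_succ_iff.1 ?_, hj⟩) hxj
  exact (hγ.lt_iff_lt hi.le (Nat.succ_le_of_lt hj)).1 (hx.1.trans_le (hBγ j hj hxj))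

theorem IsFeasibleSplit.isObedient [IsFiniteMeasure μ] {N : ℕ → Measure ℝ}
    (hN : IsFeasibleSplit μ n γ N)
    (hsame : ∀ j < n, SameMoments (μ.restrict (B j)) (N j)) : IsObedient μ n γ B := by
  intro j hj hBj
  have hmass := (hsame j hj).mass
  have hmoment := (hsame j hj).moment
  rw [measureReal_restrict_apply_univ] at hmass
  have := isFiniteMeasure_of_le μ (hN.le hj)
  rw [mem_Icc, le_condMean_iff_s19 hBj, condMean_le_iff hBj, hmass, hmoment]
  exact ⟨hN.le_moment j hj, integral_le_mul_measureReal (hN.integrable hj)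
    ((hN.ae_mem j hj).mono fun _ hx => hx.2)⟩

end Representations

theorem mul_measureReal_Ioi_le_setIntegral {κ : Measure ℝ} [IsFiniteMeasure κ]
    (hκ : Integrable (fun x => x) κ) {g : ℝ} (h : g * κ.real univ ≤ ∫ x, x ∂κ) (t : ℝ) :
    g * κ.real (Ioi t) ≤ ∫ x in Ioi t, x ∂κ := by
  rw [← measureReal_restrict_apply_univ]
  rcases le_total g t with hgt | hgt
  · exact mul_measureReal_le_integral hκ.restrict
      ((ae_restrict_mem measurableSet_Ioi).mono fun x hx => hgt.trans (le_of_lt hx))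
  · have hIic := integral_le_mul_measureReal (hκ.restrict (s := Iic t))
      ((ae_restrict_mem measurableSet_Iic).mono fun x hx => le_trans hx hgt)
    have hmoment := integral_add_compl (measurableSet_Iic (a := t)) hκ
    have hmass := measureReal_add_measureReal_compl (μ := κ) (measurableSet_Iic (a := t))
    rw [measureReal_restrict_apply_univ] at hIic ⊢
    rw [compl_Iic] at hmoment hmass
    rw [← hmass, ← hmoment, mul_add] at h
    linarith

/-- The measure that agrees with `κ₀` on the states up to `t` and with `κ` on the states
beyond `t`. -/
def splice (κ₀ κ : Measure ℝ) (t : ℝ) : Measure ℝ :=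
  κ₀.restrict (Iic t) + κ.restrict (Ioi t)

section Splice

variable {κ₀ κ : Measure ℝ}

theorem splice_eq_left {t : ℝ} (hκ₀ : ∀ᵐ x ∂κ₀, x ∈ Iic t) (hκ : ∀ᵐ x ∂κ, x ∈ Iic t) :
    splice κ₀ κ t = κ₀ := by
  have hIoi : κ (Ioi t) = 0 := by rw [← compl_Iic]; exact hκ
  rw [splice, Measure.restrict_eq_self_of_ae_mem hκ₀, Measure.restrict_eq_zero.2 hIoi, add_zero]

theorem splice_eq_right {t : ℝ} (hκ₀ : ∀ᵐ x ∂κ₀, x ∈ Ioi t) (hκ : ∀ᵐ x ∂κ, x ∈ Ioi t) :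
    splice κ₀ κ t = κ := by
  have hIic : κ₀ (Iic t) = 0 := by rw [← compl_Ioi]; exact hκ₀
  rw [splice, Measure.restrict_eq_zero.2 hIic, Measure.restrict_eq_self_of_ae_mem hκ, zero_add]

theorem continuous_measureReal_univ_splice [IsFiniteMeasure κ₀] [IsFiniteMeasure κ]
    [NullSingletonClass κ₀] [NullSingletonClass κ] :
    Continuous fun t => (splice κ₀ κ t).real univ := by
  have hmass (t : ℝ) : (splice κ₀ κ t).real univ =
      κ₀.real (Iic t) + (κ.real univ - κ.real (Iic t)) := by
    rw [splice, measureReal_add_apply, measureReal_restrict_apply_univ,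
      measureReal_restrict_apply_univ, ← compl_Iic, measureReal_compl measurableSet_Iic]
  simp_rw [hmass]
  exact (continuous_measureReal_Iic κ₀).add (continuous_const.sub (continuous_measureReal_Iic κ))

theorem sum_splice {ι : Type*} (J : Finset ι) (N₀ N : ι → Measure ℝ) (t : ℝ) :
    ∑ j ∈ J, splice (N₀ j) (N j) t = splice (∑ j ∈ J, N₀ j) (∑ j ∈ J, N j) t := by
  simp_rw [splice, Finset.sum_add_distrib, restrict_finsetSum]

theorem splice_self (t : ℝ) : splice κ κ t = κ := by
  rw [splice, ← compl_Iic, Measure.restrict_add_restrict_compl measurableSet_Iic]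

theorem mul_measureReal_splice_le_integral [IsFiniteMeasure κ₀] [IsFiniteMeasure κ]
    (hκ₀int : Integrable (fun x => x) κ₀) (hκint : Integrable (fun x => x) κ) {g : ℝ}
    (hκ₀ : ∀ᵐ x ∂κ₀, g ≤ x) (hκ : g * κ.real univ ≤ ∫ x, x ∂κ) (t : ℝ) :
    g * (splice κ₀ κ t).real univ ≤ ∫ x, x ∂splice κ₀ κ t := by
  rw [splice, measureReal_add_apply, mul_add, integral_add_measure hκ₀int.restrict hκint.restrict,
    measureReal_restrict_apply_univ (s := Ioi t)]
  exact add_le_add (mul_measureReal_le_integral hκ₀int.restrict (ae_restrict_of_ae hκ₀))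
    (mul_measureReal_Ioi_le_setIntegral hκint hκ t)

end Splice

section FeasibleSplit

variable {μ : Measure ℝ} [IsFiniteMeasure μ] {n : ℕ} {γ : ℕ → ℝ} {N₀ N : ℕ → Measure ℝ}

theorem IsFeasibleSplit.splice (hN₀ : IsFeasibleSplit μ n γ N₀) (hN : IsFeasibleSplit μ n γ N)
    (hN₀γ : ∀ j < n, ∀ᵐ x ∂N₀ j, γ j ≤ x) (t : ℝ) :
    IsFeasibleSplit μ n γ fun j => splice (N₀ j) (N j) t where
  sum_eq := by rw [sum_splice, hN₀.sum_eq, hN.sum_eq, splice_self]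
  ae_mem j hj := ae_add_measure_iff.2
    ⟨ae_restrict_of_ae (hN₀.ae_mem j hj), ae_restrict_of_ae (hN.ae_mem j hj)⟩
  le_moment j hj :=
    have := isFiniteMeasure_of_le μ (hN₀.le hj)
    have := isFiniteMeasure_of_le μ (hN.le hj)
    mul_measureReal_splice_le_integral (hN₀.integrable hj) (hN.integrable hj) (hN₀γ j hj)
      (hN.le_moment j hj) t

theorem exists_isFeasibleSplit_payoff_eq [NullSingletonClass μ] (hμ : ∀ᵐ x ∂μ, x ∈ Icc 0 1)
    (hN₀ : IsFeasibleSplit μ n γ N₀) (hN : IsFeasibleSplit μ n γ N)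
    (hN₀γ : ∀ j < n, ∀ᵐ x ∂N₀ j, γ j ≤ x) {v : ℕ → ℝ} {R : ℝ}
    (hR : R ∈ uIcc (∑ j ∈ Finset.range n, v j * (N₀ j).real univ)
      (∑ j ∈ Finset.range n, v j * (N j).real univ)) :
    ∃ N', IsFeasibleSplit μ n γ N' ∧ ∑ j ∈ Finset.range n, v j * (N' j).real univ = R := by
  set P : ℝ → ℝ := fun t => ∑ j ∈ Finset.range n, v j * (splice (N₀ j) (N j) t).real univ
  have hcont : Continuous P := by
    refine continuous_finsetSum _ fun j hj => continuous_const.mul ?_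
    have hle₀ := hN₀.le (Finset.mem_range.1 hj)
    have hle := hN.le (Finset.mem_range.1 hj)
    have := isFiniteMeasure_of_le μ hle₀
    have := isFiniteMeasure_of_le μ hle
    have : NullSingletonClass (N₀ j) := ⟨fun x => hle₀.absolutelyContinuous (measure_singleton x)⟩
    have : NullSingletonClass (N j) := ⟨fun x => hle.absolutelyContinuous (measure_singleton x)⟩
    exact continuous_measureReal_univ_splice
  have hIic : ∀ᵐ x ∂μ, x ∈ Iic 1 := hμ.mono fun x hx => hx.2
  have hone : P 1 = ∑ j ∈ Finset.range n, v j * (N₀ j).real univ :=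
    Finset.sum_congr rfl fun j hj => by
      rw [Finset.mem_range] at hj
      rw [splice_eq_left (ae_mono (hN₀.le hj) hIic) (ae_mono (hN.le hj) hIic)]
  have hIoi : ∀ᵐ x ∂μ, x ∈ Ioi (-1) := hμ.mono fun x hx => neg_one_lt_zero.trans_le hx.1
  have hneg_one : P (-1) = ∑ j ∈ Finset.range n, v j * (N j).real univ :=
    Finset.sum_congr rfl fun j hj => by
      rw [Finset.mem_range] at hj
      rw [splice_eq_right (ae_mono (hN₀.le hj) hIoi) (ae_mono (hN.le hj) hIoi)]
  rw [← hone, ← hneg_one] at hR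
  obtain ⟨t, -, ht⟩ := intermediate_value_uIcc hcont.continuousOn hR
  exact ⟨_, hN₀.splice hN hN₀γ t, ht⟩

end FeasibleSplit

theorem IsFeasibleSplit.exists_isLaminar {μ : Measure ℝ} [IsFiniteMeasure μ] [NullSingletonClass μ]
    (hμ : μ.support = Icc 0 1) {n : ℕ} {γ : ℕ → ℝ} (hγ0 : γ 0 = 0) (hγn : γ n = 1)
    (hγ : StrictMonoOn γ (Iic n)) {N : ℕ → Measure ℝ} (hN : IsFeasibleSplit μ n γ N) :
    ∃ BR : ℕ → Set ℝ, IsDetRep μ n BR ∧ IsLaminar n BR ∧ IsObedient μ n γ BR ∧ IsIC n γ BR ∧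
      ∀ j < n, SameMoments (μ.restrict (BR j)) (N j) := by
  have hγ01 {j : ℕ} (hj : j < n) : γ (j + 1) ∈ Icc 0 1 :=
    ⟨hγ0.symm.trans_le (hγ.monotoneOn n.zero_le hj j.succ.zero_le),
      (hγ.monotoneOn hj (mem_Iic.2 le_rfl) hj).trans_eq hγn⟩
  have hint : Integrable (fun x => x) μ := Integrable.of_mem_Icc 0 1 aemeasurable_id
    (hμ ▸ Measure.support_mem_ae)
  obtain ⟨a, b, hab, hsame, hcover⟩ := exists_disjointed_Icc_sameMoments hint hN.sum_eq
    (fun j hj => (hγ01 hj).1)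
    (fun i hi j hj hij => hγ.monotoneOn (Nat.succ_le_of_lt hi) (Nat.succ_le_of_lt hj)
      (Nat.succ_le_succ hij)) hN.ae_mem
  set I : ℕ → Set ℝ := fun k => Icc (a k) (b k)
  have hclosed (k : ℕ) : IsClosed (I k) := isClosed_Icc
  have hfr (k : ℕ) : μ (frontier (I k)) = 0 := measure_frontier_Icc μ _ _
  have hsub {j : ℕ} (hj : j < n) : laminarFamily I j ⊆ Icc 0 (γ (j + 1)) :=
    (laminarFamily_subset (hclosed j)).trans (Icc_subset_Icc (hab j hj).1 (hab j hj).2.2)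
  have hsub01 {j : ℕ} (hj : j < n) : laminarFamily I j ⊆ Icc 0 1 :=
    (hsub hj).trans (Icc_subset_Icc_right (hγ01 hj).2)
  have hdet : IsDetRep μ n (laminarFamily I) := by
    refine ⟨fun j hj => ⟨isClosed_closure, hsub01 hj⟩, subset_antisymm
      (iUnion₂_subset fun j hj => hsub01 (Finset.mem_range.1 hj)) ?_,
      fun i _ j _ hij => measure_laminarFamily_inter hclosed hfr hij⟩
    rw [← hμ]
    exact support_subset_biUnion_laminarFamily (by simpa only [Finset.mem_range] using hcover)
  have hsame' : ∀ j < n, SameMoments (μ.restrict (laminarFamily I j)) (N j) := fun j hj => by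
    rw [Measure.restrict_congr_set (laminarFamily_ae_eq_disjointed hclosed hfr j)]
    exact hsame j hj
  exact ⟨laminarFamily I, hdet, isLaminar_laminarFamily hclosed (fun _ => convex_Icc _ _) n,
    hN.isObedient hsame',
    isIC_of_subset_Iic hγ0 hγn hγ hdet fun j hj => (hsub hj).trans Icc_subset_Iic_self, hsame'⟩

theorem payoff_interval_attained_general {μ : Measure ℝ} [IsFiniteMeasure μ]
    [NullSingletonClass μ] (hμ : μ.support = Icc 0 1) {n : ℕ} {γ : ℕ → ℝ} (hγ0 : γ 0 = 0)
    (hγn : γ n = 1) (hγ : ∀ i < n, γ i < γ (i + 1)) {v : ℕ → ℝ} {B : ℕ → Set ℝ}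
    (hdet : IsDetRep μ n B) (hob : IsObedient μ n γ B) (hic : IsIC n γ B) {R : ℝ}
    (hR : R ∈ uIcc (payoff μ n v fun i => Icc (γ i) (γ (i + 1))) (payoff μ n v B)) :
    ∃ BR : ℕ → Set ℝ, IsDetRep μ n BR ∧ IsLaminar n BR ∧ IsObedient μ n γ BR ∧ IsIC n γ BR ∧
      payoff μ n v BR = R := by
  have hμ01 : ∀ᵐ x ∂μ, x ∈ Icc 0 1 := hμ ▸ Measure.support_mem_ae
  have hγ' : StrictMonoOn γ (Iic n) := strictMonoOn_Iic_of_lt_succ hγ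
  have hpayoff (s : ℕ → Set ℝ) :
      payoff μ n v s = ∑ j ∈ Finset.range n, v j * (μ.restrict (s j)).real univ := by
    simp_rw [measureReal_restrict_apply_univ]
    rfl
  rw [hpayoff, hpayoff] at hR
  obtain ⟨N, hN, hNR⟩ := exists_isFeasibleSplit_payoff_eq hμ01
    (isFeasibleSplit_unraveling hμ01 hγ0 hγn hγ') (hdet.isFeasibleSplit hμ01 hγn hob hic)
    (fun j _ => (ae_restrict_mem measurableSet_Icc).mono fun _ hx => hx.1) hR
  obtain ⟨BR, hBR, hlam, hBRob, hBRic, hsame⟩ := hN.exists_isLaminar hμ hγ0 hγn hγ'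
  refine ⟨BR, hBR, hlam, hBRob, hBRic, ?_⟩
  rw [← hNR, hpayoff]
  exact Finset.sum_congr rfl fun j hj => by rw [(hsame j (Finset.mem_range.1 hj)).mass]

theorem isFiniteMeasure_densMeasure {f : ℝ → ℝ} (hf : IsPrior f) :
    IsFiniteMeasure (densMeasure f) :=
  ⟨hf.prob.trans_lt ENNReal.one_lt_top⟩

instance nullSingletonClass_densMeasure (f : ℝ → ℝ) : NullSingletonClass (densMeasure f) := by
  unfold densMeasure
  infer_instance

theorem support_densMeasure {f : ℝ → ℝ} (hf : IsPrior f) :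
    (densMeasure f).support = Icc 0 1 := by
  have hac : volume.restrict (Icc (0 : ℝ) 1) ≪ densMeasure f :=
    withDensity_absolutelyContinuous' hf.meas.ennreal_ofReal.aemeasurable <| by
      filter_upwards [ae_restrict_mem measurableSet_Icc] with x hx
      simpa using hf.pos x hx
  refine subset_antisymm (Measure.support_subset_of_isClosed isClosed_Icc ?_) ?_
  · exact (withDensity_absolutelyContinuous _ _).ae_le (ae_restrict_mem measurableSet_Icc)
  · rw [← closure_Ioo zero_ne_one]
    refine closure_minimal (subset_trans ?_ hac.support_mono) Measure.isClosed_support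
    have := Measure.interior_inter_support (μ := volume) (s := Icc (0 : ℝ) 1)
    rwa [interior_Icc, Measure.support_eq_univ, inter_univ] at this

/-- every payoff between the unraveling payoff and the maximal Sender
payoff is attained by an obedient and IC laminar representation. -/
theorem payoff_interval_attained
    (f : ℝ → ℝ) (hf : IsPrior f)
    (n : ℕ) (hn : 2 ≤ n)
    (γ : ℕ → ℝ) (hγ0 : γ 0 = 0) (hγn : γ n = 1)
    (hγ : ∀ i < n, γ i < γ (i+1))
    (v : ℕ → ℝ) (hv0 : v 0 = 0) (hv : ∀ i, i + 1 < n → v i < v (i+1))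
    (B : ℕ → Set ℝ)
    (hdet : IsDetRep (densMeasure f) n B)
    (hob : IsObedient (densMeasure f) n γ B)
    (hic : IsIC n γ B)
    (hmax : ∀ B' : ℕ → Set ℝ, IsDetRep (densMeasure f) n B' →
      IsObedient (densMeasure f) n γ B' → IsIC n γ B' →
      payoff (densMeasure f) n v B' ≤ payoff (densMeasure f) n v B)
    (R : ℝ)
    (hR1 : payoff (densMeasure f) n v (fun i => Icc (γ i) (γ (i+1))) ≤ R)
    (hR2 : R ≤ payoff (densMeasure f) n v B) :
    ∃ BR : ℕ → Set ℝ, IsDetRep (densMeasure f) n BR ∧ IsLaminar n BR ∧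
      IsObedient (densMeasure f) n γ BR ∧ IsIC n γ BR ∧
      payoff (densMeasure f) n v BR = R := by
  have := isFiniteMeasure_densMeasure hf
  exact payoff_interval_attained_general (support_densMeasure hf) hγ0 hγn hγ hdet hob hic
    (Icc_subset_uIcc ⟨hR1, hR2⟩)

end VerifiableDisclosure
end
end
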